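/- arXiv:2111.10590 — 2 statements merged into one kernel-verified Lean document; each statement's English description precedes it below -/
import Mathlib

section
/- For every positive integer n with n ≠ 2, the number of partitions of n with more odd parts than even parts is strictly greater than the number of partitions of n with more even parts than odd parts; that is, p_o(n) > p_e(n). -/
/-- The number of odd parts of a partition, counted with multiplicity. -/
def Nat.Partition.oddCount {n : ℕ} (l : n.Partition) : ℕ :=
  (l.parts.filter (fun p => p % 2 = 1)).card

/-- The number of even parts of a partition, counted with multiplicity. -/
def Nat.Partition.evenCount {n : ℕ} (l : n.Partition) : ℕ :=
  (l.parts.filter (fun p => p % 2 = 0)).card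

/-- Swap the parity of a part: even parts lose one, odd parts gain one. -/
def swapPar (p : ℕ) : ℕ := if p % 2 = 0 then p - 1 else p + 1

/-- Number of odd entries. -/
def oc (s : Multiset ℕ) : ℕ := (s.filter (fun p => p % 2 = 1)).card

/-- Number of even entries. -/
def ec (s : Multiset ℕ) : ℕ := (s.filter (fun p => p % 2 = 0)).card

/-- The map: swap all parities, then add `ec - oc` ones. -/
def fwd (s : Multiset ℕ) : Multiset ℕ := s.map swapPar + Multiset.replicate (ec s - oc s) 1

lemma oc_cons (a : ℕ) (s : Multiset ℕ) : oc (a ::ₘ s) = (if a % 2 = 1 then 1 else 0) + oc s := by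
  unfold oc; rw [Multiset.filter_cons]; split_ifs <;> simp [add_comm]

lemma ec_cons (a : ℕ) (s : Multiset ℕ) : ec (a ::ₘ s) = (if a % 2 = 0 then 1 else 0) + ec s := by
  unfold ec; rw [Multiset.filter_cons]; split_ifs <;> simp [add_comm]

lemma swap_props (s : Multiset ℕ) : (∀ i ∈ s, 0 < i) →
    (s.map swapPar).sum + ec s = s.sum + oc s ∧ oc (s.map swapPar) = ec s ∧
    ec (s.map swapPar) = oc s ∧ (s.map swapPar).map swapPar = s ∧
    ∀ i ∈ s.map swapPar, 0 < i := by
  induction s using Multiset.induction with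
  | empty => intro _; simp [ec, oc]
  | cons a s ih =>
    intro h
    have ha : 0 < a := h a (Multiset.mem_cons_self a s)
    obtain ⟨h1, h2, h3, h4, h5⟩ := ih (fun i hi => h i (Multiset.mem_cons_of_mem hi))
    have hinv : swapPar (swapPar a) = a := by unfold swapPar; split_ifs <;> omega
    refine ⟨?_, ?_, ?_, ?_, ?_⟩
    · rw [Multiset.map_cons, Multiset.sum_cons, Multiset.sum_cons, ec_cons, oc_cons]
      unfold swapPar at *; split_ifs <;> omega
    · rw [Multiset.map_cons, ec_cons, oc_cons, h2]
      congr 1; unfold swapPar; split_ifs <;> omega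
    · rw [Multiset.map_cons, ec_cons, oc_cons, h3]
      congr 1; unfold swapPar; split_ifs <;> omega
    · rw [Multiset.map_cons, Multiset.map_cons, h4, hinv]
    · intro i hi
      rw [Multiset.map_cons, Multiset.mem_cons] at hi
      rcases hi with rfl | hi
      · unfold swapPar; split_ifs <;> omega
      · exact h5 i hi

lemma oc_fwd (s : Multiset ℕ) (h : ∀ i ∈ s, 0 < i) : oc (fwd s) = ec s + (ec s - oc s) := by
  have := (swap_props s h).2.1
  have e : oc (Multiset.replicate (ec s - oc s) 1) = ec s - oc s := by
    unfold oc; rw [Multiset.filter_eq_self.2, Multiset.card_replicate]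
    intro a ha; rw [Multiset.eq_of_mem_replicate ha]
  unfold fwd
  rw [show ∀ x y : Multiset ℕ, oc (x + y) = oc x + oc y by intro x y; simp [oc]]
  omega

lemma ec_fwd (s : Multiset ℕ) (h : ∀ i ∈ s, 0 < i) : ec (fwd s) = oc s := by
  have := (swap_props s h).2.2.1
  have e : ec (Multiset.replicate (ec s - oc s) 1) = 0 := by
    unfold ec; rw [Multiset.filter_eq_nil.2, Multiset.card_zero]
    intro a ha; rw [Multiset.eq_of_mem_replicate ha]; decide
  unfold fwd
  rw [show ∀ x y : Multiset ℕ, ec (x + y) = ec x + ec y by intro x y; simp [ec]]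
  omega

/-- The injection on partitions. -/
def fwdP {n : ℕ} (l : {l : n.Partition // l.oddCount < l.evenCount}) :
    {l : n.Partition // l.evenCount < l.oddCount} :=
  ⟨{ parts := fwd l.1.parts
     parts_pos := by
      intro i hi
      rcases Multiset.mem_add.1 hi with hi | hi
      · exact (swap_props l.1.parts (fun i hi => l.1.parts_pos hi)).2.2.2.2 i hi
      · rw [Multiset.eq_of_mem_replicate hi]; exact one_pos
     parts_sum := by
      have h1 := (swap_props l.1.parts (fun i hi => l.1.parts_pos hi)).1
      have h2 : oc l.1.parts < ec l.1.parts := l.2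
      have h3 := l.1.parts_sum
      unfold fwd
      rw [Multiset.sum_add, Multiset.sum_replicate, smul_eq_mul]
      omega },
   by
    have h2 : oc l.1.parts < ec l.1.parts := l.2
    have h3 := oc_fwd l.1.parts (fun i hi => l.1.parts_pos hi)
    have h4 := ec_fwd l.1.parts (fun i hi => l.1.parts_pos hi)
    change ec (fwd l.1.parts) < oc (fwd l.1.parts)
    omega⟩

lemma fwdP_injective (n : ℕ) : Function.Injective (@fwdP n) := by
  intro l m h
  have h : fwd l.1.parts = fwd m.1.parts := congrArg (fun x => x.1.parts) h
  have pl : ∀ i ∈ l.1.parts, 0 < i := fun i hi => l.1.parts_pos hi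
  have pm : ∀ i ∈ m.1.parts, 0 < i := fun i hi => m.1.parts_pos hi
  have hl : oc l.1.parts < ec l.1.parts := l.2
  have hm : oc m.1.parts < ec m.1.parts := m.2
  have a1 := oc_fwd _ pl
  have a2 := oc_fwd _ pm
  have b1 := ec_fwd _ pl
  have b2 := ec_fwd _ pm
  rw [h] at a1 b1
  have hd : ec l.1.parts - oc l.1.parts = ec m.1.parts - oc m.1.parts := by omega
  unfold fwd at h
  rw [hd] at h
  have h := add_right_cancel h
  apply Subtype.ext
  apply Nat.Partition.ext
  rw [← (swap_props _ pl).2.2.2.1, h, (swap_props _ pm).2.2.2.1]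

lemma exists_odd_diff (n : ℕ) (hn : 0 < n) (hn2 : n ≠ 2) :
    ∃ l : n.Partition, ec l.parts < oc l.parts ∧ (ec l.parts + oc l.parts) % 2 = 1 := by
  have z1 : oc 0 = 0 := by simp [oc]
  have z2 : ec 0 = 0 := by simp [ec]
  rcases Nat.mod_two_eq_zero_or_one n with h | h
  · refine ⟨⟨(n - 2) ::ₘ 1 ::ₘ 1 ::ₘ 0, ?_, ?_⟩, ?_⟩
    · intro i hi
      simp only [Multiset.mem_cons, Multiset.notMem_zero, or_false] at hi
      omega
    · simp only [Multiset.sum_cons, Multiset.sum_zero]; omega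
    · have h' : (n - 2) % 2 = 0 := by omega
      simp only [oc_cons, ec_cons, h', z1, z2]; simp
  · refine ⟨⟨n ::ₘ 0, ?_, ?_⟩, ?_⟩
    · intro i hi
      simp only [Multiset.mem_cons, Multiset.notMem_zero, or_false] at hi
      omega
    · simp
    · simp only [oc_cons, ec_cons, h, z1, z2]; simp

/-- For every positive integer `n ≠ 2`, the number of partitions of `n` with more odd
parts than even parts exceeds the number of partitions of `n` with more even parts
than odd parts. -/
theorem po_gt_pe (n : ℕ) (hn : 0 < n) (hn2 : n ≠ 2) :
    Nat.card {l : n.Partition // l.evenCount < l.oddCount} >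
      Nat.card {l : n.Partition // l.oddCount < l.evenCount} := by
  obtain ⟨l, h1, h2⟩ := exists_odd_diff n hn hn2
  rw [Nat.card_eq_fintype_card, Nat.card_eq_fintype_card]
  refine Fintype.card_lt_of_injective_of_notMem fwdP (fwdP_injective n) (b := ⟨l, h1⟩) ?_
  rintro ⟨m, hm⟩
  have hm : fwd m.1.parts = l.parts := congrArg (fun x => x.1.parts) hm
  have pm : ∀ i ∈ m.1.parts, 0 < i := fun i hi => m.1.parts_pos hi
  have hlt : oc m.1.parts < ec m.1.parts := m.2
  have a2 := oc_fwd _ pm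
  have b2 := ec_fwd _ pm
  rw [hm] at a2 b2
  omega
end

section
/- For every integer n > 19, the number of partitions of n into distinct parts with more odd parts than even parts is strictly greater than the number of partitions of n into distinct parts with more even parts than odd parts; that is, d_o(n) > d_e(n). -/
namespace DP

open PowerSeries Finset

/-- Nonnegative coefficients. -/
def NN (f : PowerSeries ℤ) : Prop := ∀ n, 0 ≤ coeff n f

lemma NN.add {f g : PowerSeries ℤ} (hf : NN f) (hg : NN g) : NN (f + g) := fun n => by
  rw [map_add]; exact add_nonneg (hf n) (hg n)

lemma NN.mul {f g : PowerSeries ℤ} (hf : NN f) (hg : NN g) : NN (f * g) := fun n => by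
  rw [coeff_mul]; exact Finset.sum_nonneg fun p _ => mul_nonneg (hf _) (hg _)

lemma NN.zero : NN 0 := fun n => by simp

lemma NN.one : NN 1 := fun n => by
  rw [coeff_one]; split_ifs <;> simp

lemma NN.X : NN (PowerSeries.X) := fun n => by
  rw [coeff_X]; split_ifs <;> simp

lemma NN.pow {f : PowerSeries ℤ} (hf : NN f) (k : ℕ) : NN (f ^ k) := by
  induction k with
  | zero => simpa using NN.one
  | succ k ih => rw [pow_succ]; exact ih.mul hf

lemma NN.natCast (k : ℕ) : NN (k : PowerSeries ℤ) := by
  induction k with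
  | zero => simpa using NN.zero
  | succ k ih => push_cast; exact ih.add NN.one

lemma NN.ofNat (k : ℕ) [k.AtLeastTwo] : NN (OfNat.ofNat k : PowerSeries ℤ) := by
  have := NN.natCast (OfNat.ofNat k); simpa using this

lemma NN.sum {ι : Type*} {s : Finset ι} {f : ι → PowerSeries ℤ} (h : ∀ i ∈ s, NN (f i)) :
    NN (∑ i ∈ s, f i) := fun n => by
  rw [map_sum]; exact Finset.sum_nonneg fun i hi => h i hi n

lemma NN.prod {ι : Type*} {s : Finset ι} {f : ι → PowerSeries ℤ} (h : ∀ i ∈ s, NN (f i)) :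
    NN (∏ i ∈ s, f i) := by
  classical
  induction s using Finset.induction_on with
  | empty => simpa using NN.one
  | insert a s ha ih =>
    rw [Finset.prod_insert ha]
    exact (h a (by simp)).mul (ih fun i hi => h i (by simp [hi]))

/-- The variable `q ^ 2`. -/
noncomputable def y : PowerSeries ℤ := X ^ 2

lemma NN.y : NN y := NN.X.pow 2
lemma NN.yp (k : ℕ) : NN (DP.y ^ k) := NN.y.pow k

/-- Geometric series. -/
noncomputable def geo (k : ℕ) : PowerSeries ℤ := PowerSeries.mk fun n => if k ∣ n then 1 else 0

lemma NN.geo (k : ℕ) : NN (geo k) := fun n => by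
  rw [DP.geo, coeff_mk]; split_ifs <;> simp

lemma geo_mul (k : ℕ) (hk : 0 < k) : (1 - X ^ k) * geo k = 1 := by
  ext n
  rw [sub_mul, one_mul, map_sub, coeff_X_pow_mul', geo, coeff_mk, coeff_one]
  by_cases h : k ≤ n
  · rw [if_pos h, coeff_mk, if_neg (by omega : n ≠ 0)]
    have : k ∣ n ↔ k ∣ n - k := by
      conv_lhs => rw [← Nat.sub_add_cancel h]
      simp
    by_cases h3 : k ∣ n
    · rw [if_pos h3, if_pos (this.1 h3), sub_self]
    · rw [if_neg h3, if_neg (fun h4 => h3 (this.2 h4)), sub_self]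
  · rw [if_neg h]
    by_cases h0 : n = 0
    · simp [h0]
    · rw [if_neg h0, if_neg (Nat.not_dvd_of_pos_of_lt (by omega) (by omega))]; simp

lemma geo_y (j : ℕ) (hj : 0 < j) : (1 - y ^ j) * geo (2 * j) = 1 := by
  rw [y, ← pow_mul]; exact geo_mul _ (by omega)

/-- `1 / ((1 - y) ... (1 - y ^ a))`. -/
noncomputable def I (a : ℕ) : PowerSeries ℤ := ∏ j ∈ Icc 1 a, geo (2 * j)

lemma NN.I (a : ℕ) : NN (I a) := NN.prod fun _ _ => NN.geo _

lemma I_zero : I 0 = 1 := by simp [I]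

lemma I_succ (a : ℕ) : I (a + 1) = I a * geo (2 * (a + 1)) := by
  rw [I, Finset.prod_Icc_succ_top (by omega)]; rfl

lemma I_red (a : ℕ) : (1 - y ^ (a + 1)) * I (a + 1) = I a := by
  rw [I_succ, mul_left_comm, geo_y _ (by omega), mul_one]

lemma I_sub (a : ℕ) (s : Finset ℕ) (hs : s ⊆ Icc 1 a) :
    NN ((∏ j ∈ s, (1 - y ^ j)) * I a) := by
  have h1 : I a = (∏ j ∈ Icc 1 a \ s, geo (2 * j)) * ∏ j ∈ s, geo (2 * j) := by
    rw [I, Finset.prod_sdiff hs]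
  rw [h1, mul_left_comm, ← Finset.prod_mul_distrib]
  have h2 : ∏ j ∈ s, (1 - y ^ j) * geo (2 * j) = 1 := by
    apply Finset.prod_eq_one
    intro j hj
    exact geo_y j (by have := hs hj; simp at this; omega)
  rw [h2, mul_one]
  exact NN.prod fun _ _ => NN.geo _

lemma I_one (a j : ℕ) (h1 : 1 ≤ j) (h2 : j ≤ a) : NN ((1 - y ^ j) * I a) := by
  have := I_sub a {j} (by simp; omega)
  simpa using this

lemma I_two (a j : ℕ) (h1 : 2 ≤ j) (h2 : j ≤ a) : NN ((1 - y) * (1 - y ^ j) * I a) := by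
  have := I_sub a {1, j} (by intro i; simp; omega)
  rwa [Finset.prod_pair (by omega), pow_one] at this

/-- factorisation of `1 - y ^ j`. -/
lemma one_sub_pow (j : ℕ) : (1 - y ^ j) = (1 - y) * ∑ i ∈ range j, y ^ i := by
  rw [mul_comm, geom_sum_mul_neg]

lemma NN.one_sub {G : PowerSeries ℤ} (h : NN ((1 - DP.y) * G)) (j : ℕ) : NN ((1 - DP.y ^ j) * G) := by
  rw [one_sub_pow, mul_assoc, mul_left_comm]
  exact (NN.sum fun i _ => NN.yp i).mul h

lemma NN.one_sub_le {G : PowerSeries ℤ} (h : NN ((1 - DP.y) * G)) {i j : ℕ} (hij : i ≤ j) :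
    NN ((DP.y ^ i - DP.y ^ j) * G) := by
  obtain ⟨k, rfl⟩ := Nat.exists_eq_add_of_le hij
  have := (NN.yp i).mul (h.one_sub k)
  convert this using 1; ring

/-! ### step lemmas -/

lemma stepA {F : PowerSeries ℤ} (m : ℕ) (hm : 1 ≤ m) (h : NN ((1 - y) * (1 - y ^ m) * F)) :
    NN (((1 + y) * (1 - y ^ m) - (1 - y ^ (2 * m))) * F) := by
  obtain ⟨r, rfl⟩ := Nat.exists_eq_add_of_le hm
  have h2 : NN ((1 - y ^ r) * ((1 - y ^ (1 + r)) * F)) := by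
    apply NN.one_sub; rwa [← mul_assoc]
  convert NN.y.mul h2 using 1; ring

lemma stepB {F : PowerSeries ℤ} (m : ℕ) (hm : 1 ≤ m) (hF : NN ((1 - y) * F))
    (h : NN ((1 - y) * (1 - y ^ m) * F))
    (h2 : NN ((1 - y) * (1 - y ^ (2 * m)) * F)) (h3 : NN ((1 - y) * (1 - y ^ (2 * m - 1)) * F)) :
    NN ((3 * ((1 + y) * (1 - y ^ m)) - 2 * (1 - y ^ (2 * m + 1))) * F) := by
  have hA := stepA m hm h
  obtain ⟨r, rfl⟩ := Nat.exists_eq_add_of_le hm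
  have e : 2 * (1 + r) - 1 = 1 + 2 * r := by omega
  rw [e] at h3
  -- (1+y)(1-y^m) - (1+y)(1-y)
  have h4 : NN ((1 + y) * y * ((1 - y ^ r) * F)) :=
    ((NN.one.add NN.y).mul NN.y).mul (hF.one_sub r)
  have := (((NN.natCast 2).mul hA).add h4).add (h2.add (NN.y.mul h3))
  convert this using 1
  push_cast
  ring

lemma stepC {F : PowerSeries ℤ} (m : ℕ) (hm : 2 ≤ m) (hF : NN ((1 - y) * F))
    (h : NN ((1 - y) * (1 - y ^ m) * F))
    (h2 : NN ((1 - y) * (1 - y ^ (2 * m)) * F)) (h3 : NN ((1 - y) * (1 - y ^ (2 * m - 1)) * F))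
    (h4 : NN ((1 - y) * (1 - y ^ (2 * m - 2)) * F)) :
    NN ((5 * ((1 + y) * (1 - y ^ m)) - 4 * (1 - y ^ (2 * m + 1))) * F) := by
  have hA := stepA m (by omega) h
  obtain ⟨r, rfl⟩ := Nat.exists_eq_add_of_le hm
  have e : 2 * (2 + r) - 1 = 3 + 2 * r := by omega
  have e' : 2 * (2 + r) - 2 = 2 + 2 * r := by omega
  rw [e] at h3; rw [e'] at h4
  have h5 : NN ((1 + y) * y ^ 2 * ((1 - y ^ r) * F)) :=
    ((NN.one.add NN.y).mul (NN.yp 2)).mul (hF.one_sub r)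
  have := (((NN.natCast 4).mul hA).add h5).add
    ((h2.add ((NN.natCast 2).mul (NN.y.mul h3))).add ((NN.yp 2).mul h4))
  convert this using 1
  push_cast
  ring

/-! ### telescoping -/

lemma tele (p q B κ e0 : ℕ) (m k σ : ℕ → ℕ) (h0 : 1 ≤ e0 + κ)
    (hσ : ∀ e, e0 ≤ e → σ (e + 1) = σ e + 2 * k e)
    (hk : ∀ e, e0 ≤ e → 2 * e + κ ≤ k e)
    (hstep : ∀ e, e0 ≤ e → e ≤ B →
      NN ((q * ((1 + y) * (1 - y ^ m e)) - p * (1 - y ^ k e)) * (I (B + e + κ) * I (B - e)))) :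
    ∀ L e, e0 ≤ e → e + L = B →
      NN ((q : PowerSeries ℤ) * (∑ i ∈ Ico e (B + 1), X ^ σ i * ((1 + y) * (1 - y ^ m i) *
        (I (B + i + κ) * I (B - i)))) - (p : PowerSeries ℤ) * (X ^ σ e * (I (B + e + κ - 1) * I (B - e)))) := by
  have key : ∀ e, e0 ≤ e → e ≤ B → NN ((y ^ (B + e + κ) - y ^ (k e + (B - e))) *
      (I (B + e + κ) * I (B - e))) := by
    intro e he heB
    have hk' := hk e he
    refine NN.one_sub_le ?_ (by omega)
    rw [← mul_assoc]
    refine NN.mul ?_ (NN.I _)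
    simpa using I_one (B + e + κ) 1 le_rfl (by omega)
  intro L
  induction L with
  | zero =>
    intro e he heB
    obtain rfl : e = B := by omega
    rw [Finset.sum_eq_sum_Ico_succ_bot (by omega)]
    simp only [Finset.Ico_self, Finset.sum_empty, add_zero]
    have h1 := hstep e he le_rfl
    have h2 := key e he le_rfl
    obtain ⟨r, hr⟩ : ∃ r, e + e + κ = r + 1 := ⟨e + e + κ - 1, by omega⟩
    rw [hr] at h1 h2 ⊢
    have h3 := I_red r
    rw [Nat.sub_self] at *
    have := (NN.X.pow (σ e)).mul (h1.add ((NN.natCast p).mul h2))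
    convert this using 1
    rw [Nat.add_sub_cancel, ← h3, add_zero]
    ring
  | succ L ih =>
    intro e he heB
    rw [Finset.sum_eq_sum_Ico_succ_bot (by omega)]
    have h1 := hstep e he (by omega)
    have h2 := key e he (by omega)
    have ih' := ih (e + 1) (by omega) (by omega)
    rw [hσ e he] at ih'
    obtain ⟨r, hr⟩ : ∃ r, B + e + κ = r + 1 := ⟨B + e + κ - 1, by omega⟩
    have hr' : B + (e + 1) + κ - 1 = r + 1 := by omega
    have hb : B - e = L + 1 := by omega
    have hb' : B - (e + 1) = L := by omega
    rw [hr, hb] at h1 h2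
    rw [hr', hb'] at ih'
    rw [hr, hb, Nat.add_sub_cancel]
    have h3 := I_red r
    have h4 := I_red L
    have := ((NN.X.pow (σ e)).mul (h1.add ((NN.natCast p).mul h2))).add ih'
    convert this using 1
    have h5 : (X : PowerSeries ℤ) ^ (σ e + 2 * k e) = X ^ σ e * y ^ k e := by
      rw [pow_add, y, ← pow_mul]
    rw [h5, ← h3, ← h4]
    generalize (∑ i ∈ Ico (e + 1) (B + 1), X ^ σ i * ((1 + y) * (1 - y ^ m i) *
        (I (B + i + κ) * I (B - i)))) = S
    ring

end DP

namespace DP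

open PowerSeries Finset

/-! ### lists as polynomials in `y` -/

noncomputable def ev : List ℤ → PowerSeries ℤ
  | [] => 0
  | a :: l => (a : PowerSeries ℤ) + y * ev l

def addL : List ℤ → List ℤ → List ℤ
  | [], l => l
  | a :: l, [] => a :: l
  | a :: l, b :: l' => (a + b) :: addL l l'

lemma ev_addL : ∀ l l', ev (addL l l') = ev l + ev l'
  | [], l => by simp [addL, ev]
  | a :: l, [] => by simp [addL, ev]
  | a :: l, b :: l' => by
    simp only [addL, ev, ev_addL l l']; push_cast; ring

def smL (c : ℤ) (l : List ℤ) : List ℤ := l.map (c * ·)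

lemma ev_smL (c : ℤ) (l : List ℤ) : ev (smL c l) = (c : PowerSeries ℤ) * ev l := by
  induction l with
  | nil => simp [smL, ev]
  | cons a l ih =>
    simp only [smL, List.map_cons, ev] at *
    rw [ih]; push_cast; ring

def shL : ℕ → List ℤ → List ℤ
  | 0, l => l
  | k + 1, l => 0 :: shL k l

lemma ev_shL (k : ℕ) (l : List ℤ) : ev (shL k l) = y ^ k * ev l := by
  induction k with
  | zero => simp [shL]
  | succ k ih => simp only [shL, ev, ih]; push_cast; ring

def omL (k : ℕ) (l : List ℤ) : List ℤ := addL l (shL k (smL (-1) l))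

lemma ev_omL (k : ℕ) (l : List ℤ) : ev (omL k l) = (1 - y ^ k) * ev l := by
  rw [omL, ev_addL, ev_shL, ev_smL]; push_cast; ring

lemma ev_append (l l' : List ℤ) : ev (l ++ l') = ev l + y ^ l.length * ev l' := by
  induction l with
  | nil => simp [ev]
  | cons a l ih => simp only [List.cons_append, ev, ih, List.length_cons]; ring

lemma ev_zeros (k : ℕ) : ev (List.replicate k 0) = 0 := by
  induction k with
  | zero => simp [ev]
  | succ k ih => simp [List.replicate_succ, ev, ih]

def padL (k : ℕ) (l : List ℤ) : List ℤ := l ++ List.replicate k 0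

lemma ev_padL (k : ℕ) (l : List ℤ) : ev (padL k l) = ev l := by
  rw [padL, ev_append, ev_zeros]; ring

lemma ev_nonneg (l : List ℤ) (h : l.all (fun a => decide (0 ≤ a)) = true) : NN (ev l) := by
  induction l with
  | nil => exact NN.zero
  | cons a l ih =>
    simp only [List.all_cons, Bool.and_eq_true, decide_eq_true_eq] at h
    obtain ⟨k, rfl⟩ := Int.eq_ofNat_of_zero_le h.1
    have := (NN.natCast k).add (NN.y.mul (ih h.2))
    simpa [ev] using this

/-- division by `1 - y ^ k` where `buf` holds the last `k` outputs. -/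
def foldL : List ℤ → List ℤ → List ℤ × List ℤ
  | [], buf => ([], buf)
  | a :: p, [] => (a :: p, [])
  | a :: p, h :: t =>
    let r := foldL p (t ++ [a + h])
    ((a + h) :: r.1, r.2)

lemma foldL_spec (p : List ℤ) : ∀ (buf : List ℤ), 0 < buf.length →
    ev p + ev buf = (1 - y ^ buf.length) * ev (foldL p buf).1 + y ^ p.length * ev (foldL p buf).2 := by
  induction p with
  | nil => intro buf _; simp [foldL, ev]
  | cons a p ih =>
    intro buf hb
    match buf, hb with
    | h :: t, _ =>
      have := ih (t ++ [a + h]) (by simp)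
      simp only [foldL, ev, List.length_cons]
      rw [ev_append] at this
      simp only [List.length_append, List.length_cons, List.length_nil, ev, zero_add] at this
      push_cast at this ⊢
      linear_combination y * this

def check : List ℤ → List ℕ → Bool
  | p, [] => p.all (fun a => decide (0 ≤ a))
  | p, k :: ks =>
    let r := foldL p (List.replicate k 0)
    check r.1 ks && check r.2 ks

def cond : List ℕ → PowerSeries ℤ → Prop
  | [], F => NN F
  | k :: ks, F => 0 < k ∧ cond ks F ∧ cond ks ((1 - y ^ k) * F)

lemma check_sound (ks : List ℕ) : ∀ (p : List ℤ) (F : PowerSeries ℤ), cond ks F →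
    check p ks = true → NN (ev p * F) := by
  induction ks with
  | nil => intro p F hF hp; exact (ev_nonneg p hp).mul hF
  | cons k ks ih =>
    intro p F hF hp
    obtain ⟨hk, h1, h2⟩ := hF
    simp only [check, Bool.and_eq_true] at hp
    have a1 := ih _ _ h2 hp.1
    have a2 := ih _ _ h1 hp.2
    have hs := foldL_spec p (List.replicate k 0) (by simpa using hk)
    rw [ev_zeros, add_zero, List.length_replicate] at hs
    rw [hs]
    have := a1.add ((NN.yp p.length).mul a2)
    convert this using 1; ring

def dup : List ℕ → List ℕ
  | [] => []
  | k :: ks => k :: k :: dup ks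

lemma cond_dup (ks : List ℕ) : ∀ F G, cond ks F → cond ks G → cond (dup ks) (F * G) := by
  induction ks with
  | nil => intro F G hF hG; exact hF.mul hG
  | cons k ks ih =>
    rintro F G ⟨hk, f1, f2⟩ ⟨_, g1, g2⟩
    refine ⟨hk, ⟨hk, ih _ _ f1 g1, ?_⟩, ⟨hk, ?_, ?_⟩⟩
    · rw [← mul_assoc]; exact ih _ _ f2 g1
    · rw [← mul_assoc]; exact ih _ _ f2 g1
    · have := ih _ _ f2 g2
      convert this using 1; ring

lemma cond_I_aux (a : ℕ) (ks : List ℕ) : ∀ (s : Finset ℕ), s ⊆ Icc 1 a → ks.Nodup →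
    (∀ k ∈ ks, 1 ≤ k ∧ k ≤ a ∧ k ∉ s) → cond ks ((∏ j ∈ s, (1 - y ^ j)) * I a) := by
  induction ks with
  | nil => intro s hs _ _; exact I_sub a s hs
  | cons k ks ih =>
    intro s hs hn hk
    rw [List.nodup_cons] at hn
    have hk0 := hk k (by simp)
    refine ⟨hk0.1, ih s hs hn.2 fun i hi => hk i (by simp [hi]), ?_⟩
    have hpi := Finset.prod_insert (f := fun j => 1 - y ^ j) hk0.2.2
    rw [← mul_assoc, ← hpi]
    refine ih _ ?_ hn.2 ?_
    · intro i hi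
      rw [Finset.mem_insert] at hi
      rcases hi with rfl | hi
      · simp; omega
      · exact hs hi
    · intro i hi
      have := hk i (by simp [hi])
      refine ⟨this.1, this.2.1, ?_⟩
      rw [Finset.mem_insert]
      rintro (rfl | h)
      · exact hn.1 hi
      · exact this.2.2 h

lemma cond_I (a : ℕ) (ks : List ℕ) (hn : ks.Nodup) (h : ∀ k ∈ ks, 1 ≤ k ∧ k ≤ a) :
    cond ks (I a) := by
  have := cond_I_aux a ks ∅ (by simp) hn (by simpa using h)
  simpa using this

/-! ### the main series inequality, small `b` -/

def QL (b : ℕ) : List ℤ :=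
  addL (smL 10 (omL b (omL b (omL (b + 1) (omL (b + 1) [1])))))
  (addL (smL 12 (shL (b + 2) (omL b (omL (b + 1) (omL (b + 1) [1])))))
  (addL (smL 12 (shL (2 * b + 4) (omL b (omL (b + 1) [1]))))
  (addL (smL 15 (shL (3 * b + 5) [1])) (smL (-15) (shL (b + 2) (omL (b + 1) (omL (b + 1) [1])))))))

noncomputable def Phi (b : ℕ) : PowerSeries ℤ :=
  10 * (I (b - 1) * I (b - 1)) + 12 * y ^ (b + 2) * (I b * I (b - 1))
    + 12 * y ^ (2 * b + 4) * (I (b + 1) * I (b - 1)) + 15 * y ^ (3 * b + 5) * (I (b + 1) * I (b + 1))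
    - 15 * y ^ (b + 2) * (I b * I b)

lemma Phi_QL (b : ℕ) (hb : 1 ≤ b) : Phi b = ev (QL b) * (I (b + 1) * I (b + 1)) := by
  obtain ⟨c, rfl⟩ := Nat.exists_eq_add_of_le' hb
  simp only [QL, ev_addL, ev_smL, ev_shL, ev_omL, ev, Phi, Nat.add_sub_cancel]
  rw [← I_red c, ← I_red (c + 1)]
  push_cast
  ring

lemma Phi_small (b : ℕ) (hb : 4 ≤ b) (hb' : b ≤ 16) : NN (Phi b) := by
  rw [Phi_QL b (by omega), ← ev_padL (2 * b + 20)]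
  have hc : check (padL (2 * b + 20) (QL b)) (dup [1, 2, b, b + 1]) = true := by
    interval_cases b <;> decide +kernel
  refine check_sound _ _ _ (cond_dup _ _ _ ?_ ?_) hc
  all_goals
    apply cond_I
    · simp; omega
    · simp; omega

/-! ### large `b` -/

lemma star {G : PowerSeries ℤ} (b k K : ℕ) (h : K + k ≤ b) (h1 : NN ((1 - y) * G))
    (h2 : NN ((1 - y) * ((1 - y) * G))) : NN ((y ^ k - y ^ b - K * (y ^ b * (1 - y))) * G) := by
  obtain ⟨r, rfl⟩ := Nat.exists_eq_add_of_le h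
  induction K with
  | zero =>
    have := h1.one_sub_le (i := k) (j := 0 + k + r) (by omega)
    convert this using 1; push_cast; ring
  | succ K ih =>
    have a := ih (by omega)
    have b1 := (NN.natCast K).mul (NN.mul (NN.yp (K + k + r)) h2)
    have b2 := (h2.one_sub_le (i := K + k + r) (j := K + 1 + k + r) (by omega))
    have := (a.add b1).add b2
    convert this using 1; push_cast; ring

lemma Phi_large (b : ℕ) (hb : 17 ≤ b) : NN (Phi b) := by
  obtain ⟨c, rfl⟩ := Nat.exists_eq_add_of_le' (show 1 ≤ b by omega)
  have hI : NN ((1 - y) * I c) := by simpa using I_one c 1 le_rfl (by omega)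
  set A := I (c + 1) * I (c + 1) with hA
  set g := geo (2 * (c + 1))
  set h := geo (2 * (c + 2))
  set z := y ^ (c + 1) with hz
  set R := I c * I c with hR
  have hg : NN g := NN.geo _
  have hh : NN h := NN.geo _
  have eR : R = (1 - z) * ((1 - z) * A) := by
    rw [hR, ← I_red c]; ring
  have eB : R * g = (1 - z) * A := by
    rw [hR, hA, I_succ]
    have := geo_y (c + 1) (by omega)
    linear_combination (-(I c * I c * g)) * this
  have eA : R * g * g = A := by
    rw [hR, hA, I_succ]; ring
  have ehh : (1 - y * z) * h = 1 := by
    have := geo_y (c + 2) (by omega)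
    have e : y * z = y ^ (c + 2) := by rw [hz]; ring
    rw [e]; exact this
  have r1 : NN ((1 - y) * R) := by rw [hR, ← mul_assoc]; exact hI.mul (NN.I _)
  have r2 : NN ((1 - y) * ((1 - y) * R)) := by
    have := hI.mul hI
    convert this using 1; rw [hR]; ring
  have b0 : NN ((1 - z) * A) := by rw [← eB]; exact ((NN.I _).mul (NN.I _)).mul hg
  have b1 : NN ((1 - y) * ((1 - z) * A)) := by rw [← eB, ← mul_assoc]; exact r1.mul hg
  have b2 : NN ((1 - y) * ((1 - y) * ((1 - z) * A))) := by
    rw [← eB]; convert r2.mul hg using 1; ring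
  have a0 : NN A := (NN.I _).mul (NN.I _)
  have a1 : NN ((1 - y) * A) := by rw [← eA]; convert b1.mul hg using 1; rw [← eB]; ring
  have a2 : NN ((1 - y) * ((1 - y) * A)) := by
    rw [← eA]; convert b2.mul hg using 1; rw [← eB]; ring
  have r0 : NN R := (NN.I _).mul (NN.I _)
  have nz : NN z := NN.yp _
  -- rewrite Phi
  have e1 : Phi (c + 1) = 10 * R + 12 * y ^ 2 * z * (R * g) + 12 * y ^ 4 * z ^ 2 * (R * g * h)
      + 15 * y ^ 5 * z ^ 3 * (A * h * h) - 15 * y ^ 2 * z * A := by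
    rw [Phi, hA, hR, hz, Nat.add_sub_cancel, I_succ (c + 1), I_succ c]; ring
  have h1 : h = 1 + y * z + y ^ 2 * z ^ 2 * h := by linear_combination (1 + y * z) * ehh
  -- extras
  have x1 : NN (12 * y ^ 4 * z ^ 2 * ((R * g) * (y ^ 2 * z ^ 2 * h))) :=
    (((NN.ofNat 12).mul (NN.yp 4)).mul (nz.pow 2)).mul
      ((r0.mul hg).mul (((NN.yp 2).mul (nz.pow 2)).mul hh))
  have x2 : NN (15 * y ^ 5 * z ^ 3 * (A * (y ^ 2 * z ^ 2 * (2 * h + h * h)))) :=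
    (((NN.ofNat 15).mul (NN.yp 5)).mul (nz.pow 3)).mul
      (a0.mul (((NN.yp 2).mul (nz.pow 2)).mul (((NN.ofNat 2).mul hh).add (hh.mul hh))))
  have h2 : h * h = 1 + 2 * (y * z) + y ^ 2 * z ^ 2 * (2 * h + h * h) := by
    linear_combination ((1 + y * z) * h + (1 + 2 * (y * z))) * ehh
  have e2 : Phi (c + 1) = (10 * R + 12 * y ^ 2 * z * ((1 - z) * A)
      + 12 * (y ^ 4 * z ^ 2 + y ^ 5 * z ^ 3) * ((1 - z) * A)
      + (15 * y ^ 5 * z ^ 3 + 30 * y ^ 6 * z ^ 4) * A - 15 * y ^ 2 * z * A)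
      + 12 * y ^ 4 * z ^ 2 * ((R * g) * (y ^ 2 * z ^ 2 * h))
      + 15 * y ^ 5 * z ^ 3 * (A * (y ^ 2 * z ^ 2 * (2 * h + h * h))) := by
    rw [e1, eB]
    linear_combination (12 * y ^ 4 * z ^ 2 * ((1 - z) * A)) * h1 + (15 * y ^ 5 * z ^ 3 * A) * h2
  rw [e2]
  refine NN.add (NN.add ?_ x1) x2
  clear x1 x2 e1 e2 h1 h2
  set B := (1 - z) * A with hB
  clear_value g h
  have p3 : NN (2 + 2 * y + y ^ 2) :=
    ((NN.ofNat 2).add ((NN.ofNat 2).mul NN.y)).add (NN.yp 2)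
  have p4 : NN (3 + 3 * y + 2 * y ^ 2 + y ^ 3) :=
    (((NN.ofNat 3).add ((NN.ofNat 3).mul NN.y)).add ((NN.ofNat 2).mul (NN.yp 2))).add (NN.yp 3)
  -- the slack polynomials
  have sl2 : NN (z ^ 2 * ((6 * (1 - y ^ 2) * R) + 12 * ((2 + 2 * y + y ^ 2) * ((1 - y) * ((1 - y) * R))))) := by
    refine (nz.pow 2).mul (NN.add ?_ ((NN.ofNat 12).mul (p3.mul r2)))
    rw [mul_assoc]; exact (NN.ofNat 6).mul (r1.one_sub 2)
  have sl1 : NN (z * (3 * ((1 - y ^ 2) * R))) := nz.mul ((NN.ofNat 3).mul (r1.one_sub 2))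
  have sl3 : NN (z ^ 3 * (12 * ((2 + 2 * y + y ^ 2) * ((1 - y) * ((1 - y) * R)))
      + 21 * ((3 + 3 * y + 2 * y ^ 2 + y ^ 3) * ((1 - y) * ((1 - y) * R))) + 6 * y ^ 5 * R)) :=
    (nz.pow 3).mul ((((NN.ofNat 12).mul (p3.mul r2)).add ((NN.ofNat 21).mul (p4.mul r2))).add
      (((NN.ofNat 6).mul (NN.yp 5)).mul r0))
  have sl4 : ∀ G, NN G → NN ((1 - y) * G) → NN ((1 - y) * ((1 - y) * G)) →
      NN (12 * ((2 + 2 * y + y ^ 2) * ((1 - y) * ((1 - y) * G)))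
      + 36 * ((3 + 3 * y + 2 * y ^ 2 + y ^ 3) * ((1 - y) * ((1 - y) * G)))
      + 6 * y ^ 5 * ((1 - y) * G) + 19 * y ^ 6 * G + 17 * z * G) := fun G g0 g1 g2 =>
    (((((NN.ofNat 12).mul (p3.mul g2)).add ((NN.ofNat 36).mul (p4.mul g2))).add
      (((NN.ofNat 6).mul (NN.yp 5)).mul g1)).add (((NN.ofNat 19).mul (NN.yp 6)).mul g0)).add
      (((NN.ofNat 17).mul nz).mul g0)
  have sl4R := (nz.pow 4).mul (sl4 R r0 r1 r2)
  have sl4B := (nz.pow 5).mul (sl4 B b0 b1 b2)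
  have sl5 : NN (z ^ 5 * (15 * ((3 + 3 * y + 2 * y ^ 2 + y ^ 3) * ((1 - y) * ((1 - y) * A)))
      + 25 * y ^ 6 * A + 5 * z * A)) :=
    (nz.pow 5).mul ((((NN.ofNat 15).mul (p4.mul a2)).add (((NN.ofNat 25).mul (NN.yp 6)).mul a0)).add
      (((NN.ofNat 5).mul nz).mul a0))
  -- star facts
  have t1 := ((NN.ofNat 2).mul nz).mul (star (c + 1) 0 17 (by omega) r1 r2)
  have t2 := ((NN.ofNat 6).mul (nz.pow 2)).mul (star (c + 1) 0 17 (by omega) r1 r2)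
  have t3 := ((NN.ofNat 8).mul (nz.pow 3)).mul (star (c + 1) 0 17 (by omega) r1 r2)
  have t4 := ((NN.ofNat 17).mul (nz.pow 4)).mul (star (c + 1) 6 11 (by omega) r1 r2)
  have t5 := ((NN.ofNat 17).mul (nz.pow 5)).mul (star (c + 1) 6 11 (by omega) b1 b2)
  have t6 := ((NN.ofNat 5).mul (nz.pow 5)).mul (star (c + 1) 6 11 (by omega) a1 a2)
  rw [← hz] at t1 t2 t3 t4 t5 t6
  -- leftover delta terms
  have d1 : NN ((1 - y) * R * (10 * z ^ 2 + 15 * z ^ 3 + 4 * z ^ 4 + 10 * z ^ 5)) :=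
    r1.mul (((((NN.ofNat 10).mul (nz.pow 2)).add ((NN.ofNat 15).mul (nz.pow 3))).add
      ((NN.ofNat 4).mul (nz.pow 4))).add ((NN.ofNat 10).mul (nz.pow 5)))
  have d2 : NN ((1 - y) * B * (10 * z ^ 6)) := b1.mul ((NN.ofNat 10).mul (nz.pow 6))
  have d3 : NN ((1 - y) * A * (10 * z ^ 6)) := a1.mul ((NN.ofNat 10).mul (nz.pow 6))
  -- final polynomial
  have f1 : NN ((1 - z) * R) := r1.one_sub (c + 1)
  have f2 : NN ((1 - z) * ((1 - z) * R)) := by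
    have : NN ((1 - y) * ((1 - z) * R)) := by
      rw [mul_left_comm]; exact r2.one_sub (c + 1)
    exact this.one_sub (c + 1)
  have f3 := (((((NN.ofNat 10).add ((NN.ofNat 15).mul nz)).add ((NN.ofNat 10).mul (nz.pow 2))).add
    ((NN.ofNat 3).mul (nz.pow 3))).mul f2)
  have f4 : NN (3 * z ^ 4 * ((1 - z) * R) + z ^ 4 * R) :=
    (((NN.ofNat 3).mul (nz.pow 4)).mul f1).add ((nz.pow 4).mul r0)
  have := ((((((((((((((((f3.add f4).add d1).add d2).add d3).add t1).add t2).add t3).add t4).add t5).add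
    t6).add sl1).add sl2).add sl3).add sl4R).add sl4B).add sl5)
  convert this using 1
  rw [eR, hB]
  clear_value R z A
  push_cast
  ring

lemma Phi_NN (b : ℕ) (hb : 4 ≤ b) : NN (Phi b) := by
  rcases le_or_gt b 16 with h | h
  · exact Phi_small b hb h
  · exact Phi_large b h

end DP

namespace DP

open PowerSeries Finset

/-! ### the building blocks -/

noncomputable def l (a b : ℕ) : PowerSeries ℤ :=
  X ^ (a ^ 2 + 2 * a + b ^ 2 + 3 * b) * (I a * I b)

lemma NN.l (a b : ℕ) : NN (l a b) := (NN.X.pow _).mul ((NN.I a).mul (NN.I b))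

noncomputable def Ev (a b : ℕ) : PowerSeries ℤ := (1 + y) * (1 - y ^ ((a - b + 1) / 2)) * l a b

noncomputable def Od (a b : ℕ) : PowerSeries ℤ := X * ((1 + y) * (1 - y ^ ((a - b) / 2)) * l a b)

lemma NN_aux (a b m : ℕ) (hb : b < a) : NN ((1 + y) * (1 - y ^ m) * l a b) := by
  have h1 : NN ((1 - y) * l a b) := by
    have h2 : NN ((1 - y) * I a) := by simpa using I_one a 1 le_rfl (by omega)
    have := (NN.X.pow (a ^ 2 + 2 * a + b ^ 2 + 3 * b)).mul (h2.mul (NN.I b))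
    convert this using 1; rw [l]; ring
  rw [mul_assoc]
  exact (NN.one.add NN.y).mul (h1.one_sub m)

lemma NN.Ev (a b : ℕ) (hb : b < a) : NN (Ev a b) := NN_aux a b _ hb
lemma NN.Od (a b : ℕ) (hb : b < a) : NN (Od a b) := NN.X.mul (NN_aux a b _ hb)

noncomputable def T0 (b e : ℕ) : PowerSeries ℤ :=
  if e % 2 = 0 then Ev (b + e) (b - e) else Od (b + e) (b - e)
noncomputable def T1 (b e : ℕ) : PowerSeries ℤ :=
  if e % 2 = 0 then Od (b + e + 1) (b - e) else Ev (b + e + 1) (b - e)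
noncomputable def T2 (b e : ℕ) : PowerSeries ℤ :=
  if e % 2 = 0 then Ev (b + e + 1) (b - e) else Od (b + e + 1) (b - e)

lemma y_pow (k : ℕ) : y ^ k = X ^ (2 * k) := by rw [y, ← pow_mul]

lemma T0_eq (b e : ℕ) (he : e ≤ b) : T0 b e = X ^ (2 * b ^ 2 + 5 * b) *
    (X ^ (2 * e ^ 2 - e + e % 2) * ((1 + y) * (1 - y ^ e) * (I (b + e + 0) * I (b - e)))) := by
  obtain ⟨r, rfl⟩ := Nat.exists_eq_add_of_le he
  have h1 : e + r - e = r := by omega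
  have h2 : e + r + e - r = 2 * e := by omega
  obtain ⟨s, hs⟩ : ∃ s, 2 * e ^ 2 - e = s ∧ 2 * e ^ 2 = e + s :=
    ⟨2 * e ^ 2 - e, rfl, by nlinarith [Nat.sub_add_cancel (show e ≤ 2 * e ^ 2 by nlinarith)]⟩
  have h3 : (e + r + e) ^ 2 + 2 * (e + r + e) + r ^ 2 + 3 * r
      = (2 * (e + r) ^ 2 + 5 * (e + r)) + s := by nlinarith [hs.2]
  rcases Nat.mod_two_eq_zero_or_one e with h | h
  · have h4 : (2 * e + 1) / 2 = e := by omega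
    simp only [T0, h, if_true, Ev, l, h1, h2, h3, hs.1, h4]
    ring_nf
  · have h4 : (2 * e) / 2 = e := by omega
    simp only [T0, h, if_false, Od, l, h1, h2, h3, hs.1, h4, one_ne_zero]
    ring_nf

lemma T1_eq (b e : ℕ) (he : e ≤ b) : T1 b e = X ^ (2 * b ^ 2 + 7 * b + 2) *
    (X ^ (2 * e ^ 2 + e + 2 - e % 2) *
      ((1 + y) * (1 - y ^ (e + e % 2)) * (I (b + e + 1) * I (b - e)))) := by
  obtain ⟨r, rfl⟩ := Nat.exists_eq_add_of_le he
  have h1 : e + r - e = r := by omega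
  have h2 : e + r + e + 1 - r = 2 * e + 1 := by omega
  have h3 : (e + r + e + 1) ^ 2 + 2 * (e + r + e + 1) + r ^ 2 + 3 * r
      = (2 * (e + r) ^ 2 + 7 * (e + r) + 2) + (2 * e ^ 2 + e + 1) := by ring
  rcases Nat.mod_two_eq_zero_or_one e with h | h
  · have h4 : (2 * e + 1) / 2 = e := by omega
    simp only [T1, h, if_true, Od, l, h1, h2, h3, h4]
    rw [Nat.sub_zero, add_zero]
    ring
  · have h4 : (2 * e + 1 + 1) / 2 = e + 1 := by omega
    simp only [T1, h, if_false, Ev, l, h1, h2, h3, h4, one_ne_zero]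
    rw [show 2 * e ^ 2 + e + 2 - 1 = 2 * e ^ 2 + e + 1 by omega]
    ring

lemma T2_eq (b e : ℕ) (he : e ≤ b) : T2 b e = X ^ (2 * b ^ 2 + 7 * b + 3) *
    (X ^ (2 * e ^ 2 + e + e % 2) *
      ((1 + y) * (1 - y ^ (e + 1 - e % 2)) * (I (b + e + 1) * I (b - e)))) := by
  obtain ⟨r, rfl⟩ := Nat.exists_eq_add_of_le he
  have h1 : e + r - e = r := by omega
  have h2 : e + r + e + 1 - r = 2 * e + 1 := by omega
  have h3 : (e + r + e + 1) ^ 2 + 2 * (e + r + e + 1) + r ^ 2 + 3 * r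
      = (2 * (e + r) ^ 2 + 7 * (e + r) + 3) + (2 * e ^ 2 + e) := by ring
  rcases Nat.mod_two_eq_zero_or_one e with h | h
  · have h4 : (2 * e + 1 + 1) / 2 = e + 1 := by omega
    simp only [T2, h, if_true, Ev, l, h1, h2, h3, h4]
    rw [Nat.sub_zero, add_zero]
    ring
  · have h4 : (2 * e + 1) / 2 = e := by omega
    simp only [T2, h, if_false, Od, l, h1, h2, h3, h4, one_ne_zero]
    rw [Nat.add_sub_cancel]
    ring

lemma condF (K L j : ℕ) (h1 : 1 ≤ j) (h2 : j ≤ K) (h3 : j = 1 → 1 ≤ L) :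
    NN ((1 - y) * (1 - y ^ j) * (I K * I L)) := by
  rcases Nat.lt_or_ge 1 j with h | h
  · rw [← mul_assoc]; exact (I_two K j h h2).mul (NN.I L)
  · obtain rfl : j = 1 := by omega
    have a := I_one K 1 le_rfl h2
    have b := I_one L 1 le_rfl (h3 rfl)
    convert a.mul b using 1; ring

lemma condF0 (K L : ℕ) (h2 : 1 ≤ K) : NN ((1 - y) * (I K * I L)) := by
  rw [← mul_assoc]
  have a := I_one K 1 le_rfl h2
  rw [pow_one] at a
  exact a.mul (NN.I _)

lemma condF1 (K L m : ℕ) (h2 : 1 ≤ K) : NN ((1 + y) * (1 - y ^ m) * (I K * I L)) := by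
  rw [mul_assoc]
  exact (NN.one.add NN.y).mul ((condF0 K L h2).one_sub m)

lemma G0_bound (b : ℕ) (hb : 2 ≤ b) :
    NN (5 * (∑ i ∈ Ico 1 (b + 1), X ^ (2 * i ^ 2 - i + i % 2) * ((1 + y) * (1 - y ^ i) *
      (I (b + i + 0) * I (b - i)))) - 4 * (y * (I b * I (b - 1)))) := by
  have := tele 4 5 b 0 1 (fun e => e) (fun e => 2 * e + 1 - e % 2) (fun i => 2 * i ^ 2 - i + i % 2)
    (by omega) ?_ ?_ ?_ (b - 1) 1 le_rfl (by omega)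
  · simpa [y] using this
  · intro e he
    obtain ⟨s, hs⟩ : ∃ s, 2 * e ^ 2 = e + s :=
      ⟨2 * e ^ 2 - e, by nlinarith [Nat.sub_add_cancel (show e ≤ 2 * e ^ 2 by nlinarith)]⟩
    have h1 : 2 * (e + 1) ^ 2 = (e + s) + 4 * e + 2 := by nlinarith
    simp only [h1, hs]
    omega
  · intro e he; omega
  · intro e he heB
    simp only [add_zero]
    rcases Nat.mod_two_eq_zero_or_one e with h | h
    · rw [h, Nat.sub_zero]
      exact_mod_cast stepC e (by omega) (condF0 _ _ (by omega)) (condF _ _ _ (by omega) (by omega) (by omega))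
        (condF _ _ _ (by omega) (by omega) (by omega)) (condF _ _ _ (by omega) (by omega) (by omega))
        (condF _ _ _ (by omega) (by omega) (by omega))
    · rw [h, Nat.add_sub_cancel]
      have a := stepA e (by omega) (condF (b + e) (b - e) e (by omega) (by omega) (by omega))
      have c := condF1 (b + e) (b - e) e (by omega)
      convert ((NN.ofNat 4).mul a).add c using 1
      push_cast; ring

lemma G1_bound (b : ℕ) (hb : 1 ≤ b) :
    NN (5 * (∑ i ∈ Ico 1 (b + 1), X ^ (2 * i ^ 2 + i + 2 - i % 2) * ((1 + y) * (1 - y ^ (i + i % 2)) *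
      (I (b + i + 1) * I (b - i)))) - 4 * (y ^ 2 * (I (b + 1) * I (b - 1)))) := by
  have := tele 4 5 b 1 1 (fun e => e + e % 2) (fun e => 2 * e + 1 + e % 2)
    (fun i => 2 * i ^ 2 + i + 2 - i % 2)
    (by omega) ?_ ?_ ?_ (b - 1) 1 le_rfl (by omega)
  · rw [y_pow 2]; simpa using this
  · intro e he
    have h1 : 2 * (e + 1) ^ 2 = 2 * e ^ 2 + 4 * e + 2 := by ring
    simp only [h1]
    omega
  · intro e he; omega
  · intro e he heB
    rcases Nat.mod_two_eq_zero_or_one e with h | h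
    · rw [h, add_zero, add_zero]
      exact_mod_cast stepC e (by omega) (condF0 _ _ (by omega)) (condF _ _ _ (by omega) (by omega) (by omega))
        (condF _ _ _ (by omega) (by omega) (by omega)) (condF _ _ _ (by omega) (by omega) (by omega))
        (condF _ _ _ (by omega) (by omega) (by omega))
    · rw [h]
      have a := stepA (e + 1) (by omega) (condF (b + e + 1) (b - e) (e + 1) (by omega) (by omega) (by omega))
      have c := condF1 (b + e + 1) (b - e) (e + 1) (by omega)
      rw [show 2 * e + 1 + 1 = 2 * (e + 1) by ring]
      convert ((NN.ofNat 4).mul a).add c using 1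
      push_cast; ring

lemma G2_bound (b : ℕ) (hb : 2 ≤ b) :
    NN (3 * (∑ i ∈ Ico 0 (b + 1), X ^ (2 * i ^ 2 + i + i % 2) * ((1 + y) * (1 - y ^ (i + 1 - i % 2)) *
      (I (b + i + 1) * I (b - i)))) - 2 * (I b * I b)) := by
  have := tele 2 3 b 1 0 (fun e => e + 1 - e % 2) (fun e => 2 * e + 2 - e % 2)
    (fun i => 2 * i ^ 2 + i + i % 2)
    (by omega) ?_ ?_ ?_ b 0 le_rfl (by omega)
  · simpa using this
  · intro e he
    have h1 : 2 * (e + 1) ^ 2 = 2 * e ^ 2 + 4 * e + 2 := by ring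
    simp only [h1]
    omega
  · intro e he; omega
  · intro e he heB
    rcases Nat.mod_two_eq_zero_or_one e with h | h
    · rw [h, Nat.sub_zero, Nat.sub_zero]
      have c := condF1 (b + e + 1) (b - e) (e + 1) (by omega)
      have a := stepA (e + 1) (by omega) (condF (b + e + 1) (b - e) (e + 1) (by omega) (by omega) (by omega))
      rw [show 2 * e + 2 = 2 * (e + 1) by ring]
      convert ((NN.ofNat 2).mul a).add c using 1
      push_cast; ring
    · rw [h, Nat.add_sub_cancel, show 2 * e + 2 - 1 = 2 * e + 1 by omega]
      exact_mod_cast stepB e (by omega) (condF0 _ _ (by omega)) (condF _ _ _ (by omega) (by omega) (by omega))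
        (condF _ _ _ (by omega) (by omega) (by omega)) (condF _ _ _ (by omega) (by omega) (by omega))

/-- The brackets. -/
noncomputable def Br (b : ℕ) : PowerSeries ℤ :=
  (∑ e ∈ range b, T2 (b - 1) e) + (∑ e ∈ Ico 1 (b + 1), T0 b e) + (∑ e ∈ Ico 1 (b + 1), T1 b e)
    + X * l (b + 1) (b + 1) - X ^ 2 * l b b

lemma Br_eq (c : ℕ) : Br (c + 1) = X ^ (2 * c ^ 2 + 7 * c + 3) * (
    (∑ i ∈ Ico 0 (c + 1), X ^ (2 * i ^ 2 + i + i % 2) * ((1 + y) * (1 - y ^ (i + 1 - i % 2)) *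
      (I (c + i + 1) * I (c - i))))
    + y ^ (c + 2) * (∑ i ∈ Ico 1 (c + 2), X ^ (2 * i ^ 2 - i + i % 2) * ((1 + y) * (1 - y ^ i) *
      (I (c + 1 + i + 0) * I (c + 1 - i))))
    + y ^ (2 * c + 4) * (∑ i ∈ Ico 1 (c + 2), X ^ (2 * i ^ 2 + i + 2 - i % 2) *
      ((1 + y) * (1 - y ^ (i + i % 2)) * (I (c + 1 + i + 1) * I (c + 1 - i))))
    + y ^ (3 * c + 8) * (I (c + 2) * I (c + 2)) - y ^ (c + 3) * (I (c + 1) * I (c + 1))) := by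
  have e1 : ∑ e ∈ range (c + 1), T2 c e = X ^ (2 * c ^ 2 + 7 * c + 3) *
     (∑ i ∈ Ico 0 (c + 1), X ^ (2 * i ^ 2 + i + i % 2) * ((1 + y) * (1 - y ^ (i + 1 - i % 2)) *
      (I (c + i + 1) * I (c - i)))) := by
    rw [Finset.mul_sum, Finset.range_eq_Ico]
    refine Finset.sum_congr rfl fun e he => T2_eq _ _ ?_
    rw [Finset.mem_Ico] at he; omega
  have e2 : ∑ e ∈ Ico 1 (c + 2), T0 (c + 1) e = X ^ (2 * (c + 1) ^ 2 + 5 * (c + 1)) *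
     (∑ i ∈ Ico 1 (c + 2), X ^ (2 * i ^ 2 - i + i % 2) * ((1 + y) * (1 - y ^ i) *
      (I (c + 1 + i + 0) * I (c + 1 - i)))) := by
    rw [Finset.mul_sum]
    refine Finset.sum_congr rfl fun e he => T0_eq _ _ ?_
    rw [Finset.mem_Ico] at he; omega
  have e3 : ∑ e ∈ Ico 1 (c + 2), T1 (c + 1) e = X ^ (2 * (c + 1) ^ 2 + 7 * (c + 1) + 2) *
     (∑ i ∈ Ico 1 (c + 2), X ^ (2 * i ^ 2 + i + 2 - i % 2) *
      ((1 + y) * (1 - y ^ (i + i % 2)) * (I (c + 1 + i + 1) * I (c + 1 - i)))) := by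
    rw [Finset.mul_sum]
    refine Finset.sum_congr rfl fun e he => T1_eq _ _ ?_
    rw [Finset.mem_Ico] at he; omega
  rw [Br, Nat.add_sub_cancel, e1, e2, e3, l, l]
  simp only [y_pow]
  ring

lemma NN_of_mul (k : ℕ) (hk : 0 < k) {f : PowerSeries ℤ} (h : NN ((k : PowerSeries ℤ) * f)) : NN f := by
  intro n
  have h1 := h n
  rw [← nsmul_eq_mul, map_nsmul, nsmul_eq_mul] at h1
  exact nonneg_of_mul_nonneg_right h1 (by exact_mod_cast hk)

lemma Br_large (b : ℕ) (hb : 4 ≤ b) : NN (Br b) := by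
  obtain ⟨c, rfl⟩ := Nat.exists_eq_add_of_le' (show 1 ≤ b by omega)
  rw [Br_eq]
  refine (NN.X.pow _).mul (NN_of_mul 15 (by norm_num) ?_)
  have g0 := G0_bound (c + 1) (by omega)
  have g1 := G1_bound (c + 1) (by omega)
  have g2 := G2_bound c (by omega)
  have p := Phi_NN (c + 1) (by omega)
  rw [Phi] at p
  rw [Nat.add_sub_cancel] at *
  have := ((((NN.ofNat 3).mul (NN.yp (c + 2))).mul g0).add
    ((((NN.ofNat 3).mul (NN.yp (2 * c + 4))).mul g1))).add (((NN.ofNat 5).mul g2).add p)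
  convert this using 1
  push_cast
  ring

end DP

namespace DP

open PowerSeries Finset

lemma I3_4 : I 3 = (1 - y ^ 4) * I 4 := (I_red 3).symm
lemma I2_3 : I 2 = (1 - y ^ 3) * I 3 := (I_red 2).symm
lemma I1_2 : I 1 = (1 - y ^ 2) * I 2 := (I_red 1).symm
lemma I0_1 : I 0 = (1 - y) * I 1 := by have := (I_red 0).symm; simpa using this

lemma cond_small (a : ℕ) (ks : List ℕ) (hn : ks.Nodup) (h : ∀ k ∈ ks, 1 ≤ k ∧ k ≤ a) (p : List ℤ)
    (hc : check p (dup ks) = true) : NN (ev p * (I a * I a)) :=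
  check_sound _ _ _ (cond_dup _ _ _ (cond_I a ks hn h) (cond_I a ks hn h)) hc

def L3 : List ℤ :=
  addL (smL 5 (addL (omL 1 (omL 4 (omL 3 (omL 4 [1, 1]))))
    (shL 2 (omL 1 (omL 4 (omL 3 (omL 2 [1, 1])))))))
  (addL (smL 4 (addL (shL 5 (omL 4 (omL 3 (omL 4 [1])))) (shL 10 (omL 3 (omL 4 [1])))))
  (smL 5 (addL (shL 14 [1]) (smL (-1) (shL 5 (omL 4 (omL 4 [1])))))))

lemma Br_three : NN (Br 3) := by
  have e : Br 3 = X ^ 25 * (((1 + y) * (1 - y) * (I 3 * I 2) + y ^ 2 * ((1 + y) * (1 - y) * (I 4 * I 1))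
     + y ^ 5 * ((1 + y) * (1 - y ^ 3) * (I 5 * I 0)))
    + y ^ 4 * (∑ i ∈ Ico 1 (3 + 1), X ^ (2 * i ^ 2 - i + i % 2) * ((1 + y) * (1 - y ^ i) *
      (I (3 + i + 0) * I (3 - i))))
    + y ^ 8 * (∑ i ∈ Ico 1 (3 + 1), X ^ (2 * i ^ 2 + i + 2 - i % 2) *
      ((1 + y) * (1 - y ^ (i + i % 2)) * (I (3 + i + 1) * I (3 - i))))
    + y ^ 14 * (I 4 * I 4) - y ^ 5 * (I 3 * I 3)) := by
    rw [Br_eq 2]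
    have : (∑ i ∈ Ico 0 (2 + 1), X ^ (2 * i ^ 2 + i + i % 2) * ((1 + y) * (1 - y ^ (i + 1 - i % 2)) *
      (I (2 + i + 1) * I (2 - i)))) = (1 + y) * (1 - y) * (I 3 * I 2) + y ^ 2 * ((1 + y) * (1 - y) * (I 4 * I 1))
     + y ^ 5 * ((1 + y) * (1 - y ^ 3) * (I 5 * I 0)) := by
      simp only [Finset.sum_Ico_eq_sum_range, Finset.sum_range_succ, Finset.sum_range_zero]
      norm_num
      simp only [y]; ring
    rw [this]
    simp only [Nat.reduceAdd, Nat.reduceMul, Nat.reducePow]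
  rw [e]
  refine (NN.X.pow _).mul (NN_of_mul 5 (by norm_num) ?_)
  have g0 := G0_bound 3 (by omega)
  have g1 := G1_bound 3 (by omega)
  have p := cond_small 4 [1, 2, 3, 4] (by decide) (by decide) (padL 8 L3) (by decide +kernel)
  rw [ev_padL] at p
  have q := (NN.yp 5).mul (condF1 5 0 3 (by norm_num))
  have := (((NN.yp 4).mul g0).add ((NN.yp 8).mul g1)).add (p.add ((NN.ofNat 5).mul q))
  convert this using 1
  simp only [L3, ev_addL, ev_smL, ev_shL, ev_omL, ev, show 3 - 1 = 2 from rfl, show 3 + 1 = 4 from rfl]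
  rw [I1_2, I2_3, I3_4]
  push_cast
  ring

def L2 : List ℤ :=
  addL (omL 1 (omL 4 (omL 3 (omL 4 (omL 3 (omL 2 [1, 1]))))))
  (addL (shL 2 (omL 1 (omL 4 (omL 4 (omL 3 (omL 2 (omL 1 [1, 1])))))))
  (addL (shL 4 (omL 1 (omL 4 (omL 4 (omL 3 (omL 2 [1, 1]))))))
  (addL (shL 6 (omL 2 (omL 4 (omL 3 (omL 2 (omL 1 [1, 1]))))))
  (addL (shL 8 (omL 2 (omL 4 (omL 3 (omL 2 [1, 1])))))
  (addL (shL 11 (omL 4 (omL 4 [1])))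
   (smL (-1) (shL 4 (omL 4 (omL 4 (omL 3 (omL 3 [1])))))))))))

lemma Br_two : NN (Br 2) := by
  have e : Br 2 = X ^ 12 * ((1 + y) * (1 - y) * (I 2 * I 1) + y ^ 2 * ((1 + y) * (1 - y) * (I 3 * I 0))
     + y ^ 4 * ((1 + y) * (1 - y) * (I 3 * I 1)) + y ^ 6 * ((1 + y) * (1 - y ^ 2) * (I 4 * I 0))
     + y ^ 8 * ((1 + y) * (1 - y ^ 2) * (I 4 * I 1)) + y ^ 12 * ((1 + y) * (1 - y ^ 2) * (I 5 * I 0))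
     + y ^ 11 * (I 3 * I 3) - y ^ 4 * (I 2 * I 2)) := by
    rw [Br_eq 1]
    simp only [Finset.sum_Ico_eq_sum_range, Finset.sum_range_succ, Finset.sum_range_zero]
    norm_num
    simp only [y]; ring
  rw [e]
  refine (NN.X.pow _).mul ?_
  have p := cond_small 4 [1, 2, 3, 4] (by decide) (by decide) (padL 8 L2) (by decide +kernel)
  rw [ev_padL] at p
  have q := (NN.yp 12).mul (condF1 5 0 2 (by norm_num))
  convert p.add q using 1
  simp only [L2, ev_addL, ev_smL, ev_shL, ev_omL, ev]
  rw [I_zero]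
  have i0 : (1 : PowerSeries ℤ) = (1 - y) * ((1 - y ^ 2) * ((1 - y ^ 3) * ((1 - y ^ 4) * I 4))) := by
    rw [← I3_4, ← I2_3, ← I1_2, ← I0_1, I_zero]
  rw [I1_2, I2_3, I3_4]
  push_cast
  linear_combination (y ^ 2 * (1 + y) * (1 - y) * (1 - y ^ 4) * I 4
    + y ^ 6 * (1 + y) * (1 - y ^ 2) * I 4) * i0

def L1 : List ℤ :=
  addL (omL 1 (omL 3 (omL 3 (omL 2 (omL 1 [1, 1])))))
  (addL (shL 3 (omL 2 (omL 3 (omL 2 (omL 1 [1, 1])))))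
  (addL (shL 5 (omL 3 (omL 3 [1])))
  (addL (shL 5 (omL 1 (omL 3 (omL 2 [1, 1]))))
  (addL (smL (-1) (omL 3 (omL 3 (omL 2 (omL 2 [1])))))
  (addL (omL 3 (omL 3 (omL 2 (omL 2 (omL 1 (omL 1 [0, 1, 2, 2, 2, 1]))))))
   (smL (-1) (shL 6 (omL 3 (omL 3 (omL 2 (omL 2 (omL 1 [1]))))))))))))

lemma Br_one : NN (Br 1 + Ev 3 1 + X ^ 9 * ev [0, 1, 2, 2, 2, 1] - X ^ 21 * I 1) := by
  have e : Br 1 + Ev 3 1 = X ^ 3 * ((1 + y) * (1 - y) * (I 1 * I 0) + y ^ 3 * (((1 + y) * (1 - y) * (I 2 * I 0))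
     + y ^ 3 * ((1 + y) * (1 - y ^ 2) * (I 3 * I 0))
     + y ^ 5 * (I 2 * I 2) + y ^ 5 * ((1 + y) * (1 - y) * (I 3 * I 1)) - I 1 * I 1)) := by
    rw [Br_eq 0, Ev, l]
    simp only [Finset.sum_Ico_eq_sum_range, Finset.sum_range_succ, Finset.sum_range_zero]
    norm_num
    simp only [y]; ring
  rw [e]
  have p := cond_small 3 [1, 2, 3] (by decide) (by decide) L1 (by decide +kernel)
  have q := condF1 1 0 1 (by norm_num)
  rw [pow_one] at q
  convert (NN.X.pow 3).mul (q.add ((NN.yp 3).mul p)) using 1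
  simp only [L1, ev_addL, ev_smL, ev_shL, ev_omL]
  generalize ev [0, 1, 2, 2, 2, 1] = E
  simp only [ev]
  rw [show (X : PowerSeries ℤ) ^ 9 = X ^ 3 * y ^ 3 by rw [y]; ring,
    show (X : PowerSeries ℤ) ^ 21 = X ^ 3 * y ^ 9 by rw [y]; ring]
  rw [I_zero]
  have i0 : (1 : PowerSeries ℤ) = (1 - y) * ((1 - y ^ 2) * ((1 - y ^ 3) * I 3)) := by
    rw [← I2_3, ← I1_2, ← I0_1, I_zero]
  have i1 : y ^ 3 * (E - y ^ 6 * I 1) = y ^ 3 * ((((1 - y) * ((1 - y ^ 2) * ((1 - y ^ 3) * I 3))) ^ 2 * E) -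
     ((1 - y) * ((1 - y ^ 2) * ((1 - y ^ 3) * I 3))) * y ^ 6 * I 1) := by rw [← i0]; ring
  rw [I2_3]
  rw [I1_2, I2_3] at *
  push_cast
  linear_combination X ^ 3 * i1 + X ^ 3 * (y ^ 3 * (1 + y) * (1 - y) * (1 - y ^ 3) * I 3
    + y ^ 6 * (1 + y) * (1 - y ^ 2) * I 3) * i0

end DP

namespace DP

open PowerSeries Finset

lemma Br_NN (b : ℕ) (hb : 2 ≤ b) : NN (Br b) := by
  rcases Nat.lt_or_ge b 4 with h | h
  · interval_cases b
    · exact Br_two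
    · exact Br_three
  · exact Br_large b h

noncomputable def DD (k : ℕ) : PowerSeries ℤ :=
  X * (∑ b ∈ range (k + 3), l b b) - X ^ 2 * (∑ b ∈ range (k + 2), l b b)
  + (∑ c ∈ range (k + 2), ∑ e ∈ Ico 1 (c + 1), T0 c e)
  + (∑ c ∈ range (k + 2), ∑ e ∈ Ico 1 (c + 1), T1 c e)
  + (∑ c ∈ range (k + 1), ∑ e ∈ range (c + 1), T2 c e) + Ev 2 0 + Ev 3 1

lemma DD_succ (k : ℕ) : DD (k + 1) = DD k + Br (k + 2) := by
  simp only [DD, Br]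
  rw [Finset.sum_range_succ (fun b => l b b) (k + 3), Finset.sum_range_succ (fun b => l b b) (k + 2)]
  rw [show k + 1 + 2 = (k + 2) + 1 by ring, Finset.sum_range_succ _ (k + 2),
    Finset.sum_range_succ _ (k + 2), Finset.sum_range_succ (fun c => ∑ e ∈ range (c + 1), T2 c e) (k + 1)]
  rw [show k + 2 - 1 = k + 1 by omega, show k + 1 + 1 = k + 2 by ring]
  ring

lemma DD_NN (k : ℕ) :
    NN (DD k + X ^ 2 + X ^ 9 * ev [0, 1, 2, 2, 2, 1] - X ^ 21 * I 1 - X ^ 8 * I 1) := by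
  induction k with
  | zero =>
    have h1 := (Br_one.add (NN.X.mul (NN.l 1 1))).add NN.X
    convert h1 using 1
    have e : Ev 2 0 = X ^ 8 * I 1 := by
      have : I 1 = (1 - y ^ 2) * I 2 := (I_red 1).symm
      rw [this, Ev, l, I_zero]
      norm_num; ring
    have l0 : l 0 0 = 1 := by simp [l, I_zero]
    rw [DD, Br, e]
    simp [Finset.sum_range_succ, l0]
    ring
  | succ k ih =>
    rw [DD_succ]
    convert ih.add (Br_NN (k + 2) (by omega)) using 1
    ring

lemma I1_coeff (n : ℕ) : coeff n (I 1) = if 2 ∣ n then 1 else 0 := by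
  have : I 1 = geo 2 := by simp [I]
  rw [this, geo, coeff_mk]

lemma DD_pos (k n : ℕ) (hn : 20 ≤ n) : 1 ≤ coeff n (DD k) := by
  have h := DD_NN k n
  simp only [map_sub, map_add] at h
  have h1 : coeff n ((X : PowerSeries ℤ) ^ 2) = 0 := by
    rw [coeff_X_pow, if_neg (by omega)]
  have h2 : coeff n (X ^ 9 * ev [0, 1, 2, 2, 2, 1]) = 0 := by
    have : X ^ 9 * ev [0, 1, 2, 2, 2, 1] = X ^ 11 + 2 * X ^ 13 + 2 * X ^ 15 + 2 * X ^ 17 + X ^ 19 := by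
      simp only [ev, y]; push_cast; ring
    rw [this]
    have e : ∀ k, coeff n (2 * (X : PowerSeries ℤ) ^ k) = 2 * coeff n ((X : PowerSeries ℤ) ^ k) := by
      intro k
      rw [two_mul, map_add, two_mul]
    simp only [map_add, e, coeff_X_pow]
    rw [if_neg (by omega), if_neg (by omega), if_neg (by omega), if_neg (by omega), if_neg (by omega)]
    rfl
  rw [h1, h2, coeff_X_pow_mul', coeff_X_pow_mul', I1_coeff, I1_coeff] at h
  split_ifs at h <;> omega

/-! ### the square sums -/

noncomputable def oo (a : ℕ) : PowerSeries ℤ := X ^ (a ^ 2 + 2 * a) * I a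
noncomputable def ee (b : ℕ) : PowerSeries ℤ := X ^ (b ^ 2 + 3 * b) * I b
noncomputable def O (a : ℕ) : PowerSeries ℤ := X ^ (a ^ 2) * I a
noncomputable def E (b : ℕ) : PowerSeries ℤ := X ^ (b ^ 2 + b) * I b

lemma O_succ (a : ℕ) : O (a + 1) = oo (a + 1) + X * oo a := by
  rw [O, oo, oo, ← I_red a, y_pow]; ring

lemma E_succ (a : ℕ) : E (a + 1) = ee (a + 1) + X ^ 2 * ee a := by
  rw [E, ee, ee, ← I_red a, y_pow]; ring

lemma sum_O (s : ℕ → PowerSeries ℤ) (m : ℕ) : ∑ a ∈ range (m + 1), s a * O a =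
    ∑ a ∈ range (m + 1), (s a + X * s (a + 1)) * oo a - X * s (m + 1) * oo m := by
  induction m with
  | zero => simp [O, oo]; ring
  | succ m ih => rw [Finset.sum_range_succ, ih, Finset.sum_range_succ _ (m + 1), O_succ]; ring

lemma sum_E (s : ℕ → PowerSeries ℤ) (m : ℕ) : ∑ a ∈ range (m + 1), s a * E a =
    ∑ a ∈ range (m + 1), (s a + X ^ 2 * s (a + 1)) * ee a - X ^ 2 * s (m + 1) * ee m := by
  induction m with
  | zero => simp [E, ee]; ring
  | succ m ih => rw [Finset.sum_range_succ, ih, Finset.sum_range_succ _ (m + 1), E_succ]; ring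

lemma oo_dvd (m : ℕ) : X ^ m ∣ oo m := by
  rw [oo]; exact Dvd.dvd.mul_right (pow_dvd_pow _ (by nlinarith)) _
lemma ee_dvd (m : ℕ) : X ^ m ∣ ee m := by
  rw [ee]; exact Dvd.dvd.mul_right (pow_dvd_pow _ (by nlinarith)) _

lemma l_eq (a b : ℕ) : l a b = oo a * ee b := by rw [l, oo, ee]; ring

/-- sign of `a - b`. -/
noncomputable def sg (a b : ℕ) : PowerSeries ℤ := if b < a then 1 else if a < b then -1 else 0

noncomputable def ww (a b : ℕ) : PowerSeries ℤ :=
  sg a b + X ^ 2 * sg a (b + 1) + X * (sg (a + 1) b + X ^ 2 * sg (a + 1) (b + 1))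

noncomputable def SS (m : ℕ) : PowerSeries ℤ :=
  ∑ a ∈ range (m + 1), ∑ b ∈ range (m + 1), sg a b * (O a * E b)

lemma SS_dvd (m : ℕ) : X ^ m ∣ SS m - ∑ a ∈ range (m + 1), ∑ b ∈ range (m + 1), ww a b * l a b := by
  have h1 : SS m = ∑ a ∈ range (m + 1), (∑ b ∈ range (m + 1), (sg a b + X ^ 2 * sg a (b + 1)) * ee b
      - X ^ 2 * sg a (m + 1) * ee m) * O a := by
    rw [SS]
    refine Finset.sum_congr rfl fun a _ => ?_
    rw [← sum_E, Finset.sum_mul]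
    exact Finset.sum_congr rfl fun b _ => by ring
  rw [h1, sum_O]
  have h2 : ∑ a ∈ range (m + 1), ∑ b ∈ range (m + 1), ww a b * l a b =
     ∑ a ∈ range (m + 1), (∑ b ∈ range (m + 1), (sg a b + X ^ 2 * sg a (b + 1)) * ee b
      + X * ∑ b ∈ range (m + 1), (sg (a + 1) b + X ^ 2 * sg (a + 1) (b + 1)) * ee b) * oo a := by
    refine Finset.sum_congr rfl fun a _ => ?_
    rw [Finset.mul_sum, ← Finset.sum_add_distrib, Finset.sum_mul]
    refine Finset.sum_congr rfl fun b _ => ?_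
    rw [ww, l_eq]; ring
  rw [h2, sub_right_comm, ← Finset.sum_sub_distrib]
  refine dvd_sub (Finset.dvd_sum fun a _ => ?_) ((oo_dvd m).mul_left _)
  have : ∀ P Q R T : PowerSeries ℤ, (P - X ^ 2 * R * ee m + X * (Q - X ^ 2 * T * ee m)) * oo a
    - (P + X * Q) * oo a = ee m * (-(X ^ 2 * R + X * (X ^ 2 * T)) * oo a) := by intros; ring
  rw [this]
  exact (ee_dvd m).mul_right _

lemma fold_sum (g : ℕ → ℕ → PowerSeries ℤ) (M : ℕ) : ∑ a ∈ range M, ∑ b ∈ range M, g a b =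
    ∑ a ∈ range M, g a a + ∑ a ∈ range M, ∑ b ∈ range a, (g a b + g b a) := by
  induction M with
  | zero => simp
  | succ M ih =>
    rw [Finset.sum_range_succ, Finset.sum_range_succ _ M, Finset.sum_range_succ _ M,
      Finset.sum_range_succ (fun a => ∑ b ∈ range a, (g a b + g b a))]
    simp only [Finset.sum_range_succ (fun b => g _ b), Finset.sum_add_distrib] at *
    linear_combination ih

lemma ww_diag (a : ℕ) : ww a a = X - X ^ 2 := by
  simp [ww, sg]; ring

lemma ww_pair (a b : ℕ) (h : b < a) : ww a b * l a b + ww b a * l b a = Ev a b + Od a b := by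
  obtain ⟨j, rfl⟩ := Nat.exists_eq_add_of_lt h
  have hl : l b (b + j + 1) = X ^ (j + 1) * l (b + j + 1) b := by
    rw [l, l]; ring
  rw [hl, Ev, Od]
  have e1 : b + j + 1 - b = j + 1 := by omega
  rw [e1]
  rcases Nat.eq_zero_or_pos j with rfl | hj
  · have h0 : ¬ (b + 1 + 1 < b) := by omega
    simp [ww, sg, y, h0]; ring
  · have w1 : ww (b + j + 1) b = (1 + X) * (1 + X ^ 2) := by
      rw [ww, sg, if_pos (by omega), sg, if_pos (by omega), sg, if_pos (by omega), sg,
        if_pos (by omega)]; ring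
    have w2 : ww b (b + j + 1) = - ((1 + X) * (1 + X ^ 2)) := by
      simp only [ww, sg]
      rw [if_neg (by omega), if_pos (by omega), if_neg (by omega), if_pos (by omega),
        if_neg (by omega), if_pos (by omega), if_neg (by omega), if_pos (by omega)]; ring
    rw [w1, w2]
    rcases Nat.even_or_odd' j with ⟨i, rfl | rfl⟩
    · rw [show (2 * i + 1 + 1) / 2 = i + 1 by omega, show (2 * i + 1) / 2 = i by omega, y_pow, y_pow, y]
      ring
    · rw [show (2 * i + 1 + 1 + 1) / 2 = i + 1 by omega, show (2 * i + 1 + 1) / 2 = i + 1 by omega,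
        y_pow, y]
      ring

lemma NN_subset {ι : Type*} {s t : Finset ι} {f : ι → PowerSeries ℤ} (h : s ⊆ t)
    (hf : ∀ i ∈ t, NN (f i)) : NN (∑ i ∈ t, f i - ∑ i ∈ s, f i) := by
  classical
  rw [← Finset.sum_sdiff h, add_sub_cancel_right]
  exact NN.sum fun i hi => hf i (Finset.sdiff_subset hi)

lemma NN_regroup (H : ℕ → ℕ → PowerSeries ℤ) (hH : ∀ a b, b < a → NN (H a b)) (K : ℕ) :
    NN (∑ a ∈ range (2 * K), ∑ b ∈ range a, H a b
      - (∑ c ∈ range K, ∑ e ∈ Ico 1 (c + 1), H (c + e) (c - e)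
        + ∑ c ∈ range K, ∑ e ∈ range (c + 1), H (c + e + 1) (c - e))) := by
  classical
  rw [Finset.sum_sigma', Finset.sum_sigma', Finset.sum_sigma']
  set P := (range (2 * K)).sigma fun a => range a
  set A := (range K).sigma fun c => Ico 1 (c + 1)
  set B := (range K).sigma fun c => range (c + 1)
  let f : (Σ _ : ℕ, ℕ) → (Σ _ : ℕ, ℕ) := fun x => ⟨x.1 + x.2, x.1 - x.2⟩
  let g : (Σ _ : ℕ, ℕ) → (Σ _ : ℕ, ℕ) := fun x => ⟨x.1 + x.2 + 1, x.1 - x.2⟩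
  have hf : Set.InjOn f A := by
    rintro ⟨c, e⟩ h ⟨c', e'⟩ h' heq
    simp only [A, Finset.coe_sigma, Set.mem_sigma_iff, Finset.mem_coe, Finset.mem_range, Finset.mem_Ico] at h h'
    simp only [f, Sigma.mk.injEq, heq_eq_eq] at heq ⊢
    omega
  have hg : Set.InjOn g B := by
    rintro ⟨c, e⟩ h ⟨c', e'⟩ h' heq
    simp only [B, Finset.coe_sigma, Set.mem_sigma_iff, Finset.mem_coe, Finset.mem_range] at h h'
    simp only [g, Sigma.mk.injEq, heq_eq_eq] at heq ⊢
    omega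
  have e1 : ∑ x ∈ A, H (x.1 + x.2) (x.1 - x.2) = ∑ x ∈ A.image f, H x.1 x.2 := by
    rw [Finset.sum_image hf]
  have e2 : ∑ x ∈ B, H (x.1 + x.2 + 1) (x.1 - x.2) = ∑ x ∈ B.image g, H x.1 x.2 := by
    rw [Finset.sum_image hg]
  have hd : Disjoint (A.image f) (B.image g) := by
    rw [Finset.disjoint_left]
    rintro ⟨a, b⟩ h1 h2
    simp only [Finset.mem_image, A, B, f, g, Finset.mem_sigma, Finset.mem_range, Finset.mem_Ico,
      Sigma.exists, Sigma.mk.injEq, heq_eq_eq] at h1 h2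
    obtain ⟨c, e, h3, h4, h5⟩ := h1
    obtain ⟨c', e', h3', h4', h5'⟩ := h2
    omega
  rw [e1, e2, ← Finset.sum_union hd]
  apply NN_subset
  · intro x hx
    rw [Finset.mem_union] at hx
    obtain ⟨a, b⟩ := x
    simp only [Finset.mem_image, A, B, P, f, g, Finset.mem_sigma, Finset.mem_range, Finset.mem_Ico,
      Sigma.exists, Sigma.mk.injEq, heq_eq_eq] at hx ⊢
    rcases hx with ⟨c, e, h3, h4, h5⟩ | ⟨c, e, h3, h4, h5⟩ <;> omega
  · rintro ⟨a, b⟩ hx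
    simp only [P, Finset.mem_sigma, Finset.mem_range] at hx
    exact hH a b hx.2

noncomputable def T3 (b e : ℕ) : PowerSeries ℤ :=
  if e % 2 = 0 then Od (b + e) (b - e) else Ev (b + e) (b - e)

lemma tot_NN (k : ℕ) : NN (X * (∑ b ∈ range (2 * (k + 3)), l b b) - X ^ 2 * (∑ b ∈ range (k + 2), l b b)
    + ∑ a ∈ range (2 * (k + 3)), ∑ b ∈ range a, (Ev a b + Od a b) - DD k) := by
  have h1 := NN_regroup (fun a b => Ev a b + Od a b)
    (fun a b h => (NN.Ev a b h).add (NN.Od a b h)) (k + 3)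
  have e1 : ∀ c e, Ev (c + e) (c - e) + Od (c + e) (c - e) = T0 c e + T3 c e := by
    intro c e; rw [T0, T3]; split_ifs <;> ring
  have e2 : ∀ c e, Ev (c + e + 1) (c - e) + Od (c + e + 1) (c - e) = T1 c e + T2 c e := by
    intro c e; rw [T1, T2]; split_ifs <;> ring
  simp only [e1, e2, Finset.sum_add_distrib] at h1
  have n0 : ∀ c, ∀ e ∈ Ico 1 (c + 1), NN (T0 c e) := by
    intro c e he
    rw [Finset.mem_Ico] at he
    rw [T0]; split_ifs
    · exact NN.Ev _ _ (by omega)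
    · exact NN.Od _ _ (by omega)
  have n3 : ∀ c, ∀ e ∈ Ico 1 (c + 1), NN (T3 c e) := by
    intro c e he
    rw [Finset.mem_Ico] at he
    rw [T3]; split_ifs
    · exact NN.Od _ _ (by omega)
    · exact NN.Ev _ _ (by omega)
  have n1 : ∀ c, ∀ e ∈ range (c + 1), NN (T1 c e) := by
    intro c e he
    rw [Finset.mem_range] at he
    rw [T1]; split_ifs
    · exact NN.Od _ _ (by omega)
    · exact NN.Ev _ _ (by omega)
  have n2 : ∀ c, ∀ e ∈ range (c + 1), NN (T2 c e) := by
    intro c e he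
    rw [Finset.mem_range] at he
    rw [T2]; split_ifs
    · exact NN.Ev _ _ (by omega)
    · exact NN.Od _ _ (by omega)
  have g0 : NN (∑ c ∈ range (k + 3), ∑ e ∈ Ico 1 (c + 1), T0 c e
      - ∑ c ∈ range (k + 2), ∑ e ∈ Ico 1 (c + 1), T0 c e) :=
    NN_subset (by intro i; simp only [Finset.mem_range]; omega) fun c _ => NN.sum (n0 c)
  have g1 : NN (∑ c ∈ range (k + 3), ∑ e ∈ range (c + 1), T1 c e
      - ∑ c ∈ range (k + 2), ∑ e ∈ range (c + 1), T1 c e) :=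
    NN_subset (by intro i; simp only [Finset.mem_range]; omega) fun c _ => NN.sum (n1 c)
  have g1' : NN (∑ c ∈ range (k + 2), ∑ e ∈ range (c + 1), T1 c e
      - ∑ c ∈ range (k + 2), ∑ e ∈ Ico 1 (c + 1), T1 c e) := by
    rw [← Finset.sum_sub_distrib]
    refine NN.sum fun c _ => NN_subset ?_ (n1 c)
    intro i; simp only [Finset.mem_range, Finset.mem_Ico]; omega
  have g2 : NN (∑ c ∈ range (k + 3), ∑ e ∈ range (c + 1), T2 c e
      - ∑ c ∈ range (k + 1), ∑ e ∈ range (c + 1), T2 c e) :=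
    NN_subset (by intro i; simp only [Finset.mem_range]; omega) fun c _ => NN.sum (n2 c)
  have g3 : NN (∑ c ∈ range (k + 3), ∑ e ∈ Ico 1 (c + 1), T3 c e
      - ∑ c ∈ ({1, 2} : Finset ℕ), ∑ e ∈ Ico 1 (c + 1), T3 c e) :=
    NN_subset (by intro i; simp only [Finset.mem_range, Finset.mem_insert, Finset.mem_singleton]; omega)
      fun c _ => NN.sum (n3 c)
  have g4 : ∑ c ∈ ({1, 2} : Finset ℕ), ∑ e ∈ Ico 1 (c + 1), T3 c e = Ev 2 0 + Ev 3 1 + T3 2 2 := by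
    rw [Finset.sum_pair (by norm_num)]
    simp [Finset.sum_Ico_succ_top, T3]; ring
  have g5 : NN (T3 2 2) := n3 2 2 (by simp)
  have g6 : NN (∑ b ∈ range (2 * (k + 3)), l b b - ∑ b ∈ range (k + 3), l b b) :=
    NN_subset (by intro i; simp only [Finset.mem_range]; omega) fun c _ => NN.l c c
  rw [g4] at g3
  have := (h1.add (g0.add (g1.add (g1'.add g2)))).add ((g3.add g5).add (NN.X.mul g6))
  convert this using 1
  simp only [DD, Finset.sum_add_distrib]
  ring

lemma l_coeff (n b : ℕ) (h : n < b) : coeff n (l b b) = 0 := by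
  rw [l, coeff_X_pow_mul', if_neg (by nlinarith)]

theorem SS_pos (n : ℕ) (hn : 20 ≤ n) : 1 ≤ coeff n (SS (2 * n + 5)) := by
  have h1 := SS_dvd (2 * n + 5)
  rw [fold_sum] at h1
  have h2 : ∑ a ∈ range (2 * n + 5 + 1), ∑ b ∈ range a, (ww a b * l a b + ww b a * l b a)
      = ∑ a ∈ range (2 * (n + 3)), ∑ b ∈ range a, (Ev a b + Od a b) := by
    rw [show 2 * n + 5 + 1 = 2 * (n + 3) by ring]
    refine Finset.sum_congr rfl fun a _ => Finset.sum_congr rfl fun b hb => ?_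
    rw [Finset.mem_range] at hb
    exact ww_pair a b hb
  rw [h2] at h1
  simp only [ww_diag] at h1
  have h3 := (X_pow_dvd_iff.1 h1) n (by omega)
  have h4 := tot_NN n n
  have h5 := DD_pos n n hn
  rw [← Finset.mul_sum, show 2 * n + 5 + 1 = 2 * (n + 3) by ring, sub_mul] at h3
  have h6 : coeff n (X ^ 2 * ∑ b ∈ range (2 * (n + 3)), l b b)
      = coeff n (X ^ 2 * ∑ b ∈ range (n + 2), l b b) := by
    simp only [Finset.mul_sum, map_sum]
    symm
    apply Finset.sum_subset
    · intro i; simp only [Finset.mem_range]; omega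
    · intro b _ hb
      rw [Finset.mem_range] at hb
      rw [coeff_X_pow_mul']
      split_ifs
      · exact l_coeff _ _ (by omega)
      · rfl
  simp only [map_sub, map_add] at h3 h4
  rw [h6] at h3
  linarith

end DP

namespace DP

open PowerSeries Finset

/-! ### elementary symmetric sums -/

noncomputable def es (w : ℕ → PowerSeries ℤ) (N a : ℕ) : PowerSeries ℤ :=
  ∑ s ∈ powersetCard a (range N), ∏ i ∈ s, w i

lemma es_zero (w : ℕ → PowerSeries ℤ) (N : ℕ) : es w N 0 = 1 := by simp [es]

lemma es_smul (c : PowerSeries ℤ) (w : ℕ → PowerSeries ℤ) (N a : ℕ) :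
    es (fun i => c * w i) N a = c ^ a * es w N a := by
  rw [es, es, Finset.mul_sum]
  refine Finset.sum_congr rfl fun s hs => ?_
  rw [Finset.prod_mul_distrib, Finset.prod_const, (Finset.mem_powersetCard.1 hs).2]

lemma es_succ (w : ℕ → PowerSeries ℤ) (N a : ℕ) :
    es w (N + 1) (a + 1) = es (fun i => w (i + 1)) N (a + 1) + w 0 * es (fun i => w (i + 1)) N a := by
  classical
  have hr : range (N + 1) = insert 0 ((range N).map (addRightEmbedding 1)) := by
    ext i
    simp only [Finset.mem_range, Finset.mem_insert, Finset.mem_map, addRightEmbedding_apply]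
    constructor
    · intro h
      rcases Nat.eq_zero_or_pos i with h0 | h0
      · exact Or.inl h0
      · exact Or.inr ⟨i - 1, by omega, by omega⟩
    · rintro (h | ⟨j, h1, h2⟩) <;> omega
  have h0 : 0 ∉ (range N).map (addRightEmbedding 1) := by simp
  rw [es, hr, Finset.powersetCard_succ_insert h0, Finset.sum_union]
  · congr 1
    · rw [Finset.powersetCard_map, Finset.sum_map, es]
      refine Finset.sum_congr rfl fun s _ => ?_
      simp [Finset.mapEmbedding_apply]
    · rw [Finset.sum_image, Finset.powersetCard_map, Finset.sum_map, es, Finset.mul_sum]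
      · refine Finset.sum_congr rfl fun s _ => ?_
        change ∏ i ∈ insert 0 (s.map (addRightEmbedding 1)), w i = _
        rw [Finset.prod_insert (by simp)]
        simp
      · intro s hs t ht hst
        have hs0 : 0 ∉ s := fun h => h0 ((Finset.mem_powersetCard.1 hs).1 h)
        have ht0 : 0 ∉ t := fun h => h0 ((Finset.mem_powersetCard.1 ht).1 h)
        rw [← Finset.erase_insert hs0, ← Finset.erase_insert ht0, hst]
  · rw [Finset.disjoint_left]
    intro s hs hs'
    obtain ⟨t, _, rfl⟩ := Finset.mem_image.1 hs'
    exact h0 ((Finset.mem_powersetCard.1 hs).1 (Finset.mem_insert_self _ _))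

lemma O_rec (a : ℕ) : O (a + 1) = y ^ (a + 1) * O (a + 1) + X * (y ^ a * O a) := by
  rw [O, O, ← I_red a, y_pow, y_pow]; ring

lemma E_rec (a : ℕ) : E (a + 1) = y ^ (a + 1) * E (a + 1) + X ^ 2 * (y ^ a * E a) := by
  rw [E, E, ← I_red a, y_pow, y_pow]; ring

lemma es_odd (N : ℕ) : ∀ a, X ^ N ∣ es (fun i => X ^ (2 * i + 1)) N a - O a := by
  induction N with
  | zero => intro a; simp
  | succ N ih =>
    intro a
    cases a with
    | zero => simp [es_zero, O, I_zero]
    | succ a =>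
      have hw : (fun i => (X : PowerSeries ℤ) ^ (2 * (i + 1) + 1)) = fun i => y * X ^ (2 * i + 1) := by
        funext i; rw [y]; ring
      rw [es_succ, hw, es_smul, es_smul, O_rec]
      obtain ⟨u, hu⟩ := ih (a + 1)
      obtain ⟨v, hv⟩ := ih a
      refine ⟨X * y ^ a * u + y ^ a * v, ?_⟩
      have hy : y ^ (a + 1) = X * (X * y ^ a) := by rw [pow_succ, y]; ring
      rw [hy]
      linear_combination X * (X * y ^ a) * hu + X * y ^ a * hv

lemma es_even (N : ℕ) : ∀ a, X ^ N ∣ es (fun i => X ^ (2 * i + 2)) N a - E a := by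
  induction N with
  | zero => intro a; simp
  | succ N ih =>
    intro a
    cases a with
    | zero => simp [es_zero, E, I_zero]
    | succ a =>
      have hw : (fun i => (X : PowerSeries ℤ) ^ (2 * (i + 1) + 2)) = fun i => y * X ^ (2 * i + 2) := by
        funext i; rw [y]; ring
      rw [es_succ, hw, es_smul, es_smul, E_rec]
      obtain ⟨u, hu⟩ := ih (a + 1)
      obtain ⟨v, hv⟩ := ih a
      refine ⟨X * y ^ a * u + X * y ^ a * v, ?_⟩
      have hy : y ^ (a + 1) = X * (X * y ^ a) := by rw [pow_succ, y]; ring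
      rw [hy]
      linear_combination X * (X * y ^ a) * hu + X ^ 2 * y ^ a * hv

def wt (p : Finset ℕ × Finset ℕ) : ℕ := ∑ i ∈ p.1, (2 * i + 1) + ∑ i ∈ p.2, (2 * i + 2)

def sgz (a b : ℕ) : ℤ := if b < a then 1 else if a < b then -1 else 0

lemma sg_eq (a b : ℕ) : sg a b = C (sgz a b) := by
  rw [sg, sgz]; split_ifs <;> simp

lemma SS_dvd' (m : ℕ) : X ^ m ∣ ∑ p ∈ powerset (range m) ×ˢ powerset (range m),
    sg p.1.card p.2.card * X ^ wt p - SS m := by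
  have h : ∑ p ∈ powerset (range m) ×ˢ powerset (range m), sg p.1.card p.2.card * X ^ wt p =
      ∑ a ∈ range (m + 1), ∑ b ∈ range (m + 1), sg a b * (es (fun i => X ^ (2 * i + 1)) m a *
        es (fun i => X ^ (2 * i + 2)) m b) := by
    rw [Finset.sum_product, Finset.sum_powerset]
    rw [Finset.card_range]
    refine Finset.sum_congr rfl fun a _ => ?_
    have : ∀ A ∈ powersetCard a (range m), ∑ B ∈ powerset (range m), sg A.card B.card * X ^ wt (A, B)
        = ∑ b ∈ range (m + 1), sg a b * ((∏ i ∈ A, X ^ (2 * i + 1)) *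
        es (fun i => X ^ (2 * i + 2)) m b) := by
      intro A hA
      rw [Finset.sum_powerset, Finset.card_range]
      refine Finset.sum_congr rfl fun b _ => ?_
      rw [es, Finset.mul_sum, Finset.mul_sum]
      refine Finset.sum_congr rfl fun B hB => ?_
      rw [(Finset.mem_powersetCard.1 hA).2, (Finset.mem_powersetCard.1 hB).2, wt,
        Finset.prod_pow_eq_pow_sum, Finset.prod_pow_eq_pow_sum, pow_add]
    rw [Finset.sum_congr rfl this, Finset.sum_comm]
    refine Finset.sum_congr rfl fun b _ => ?_
    rw [← Finset.mul_sum, ← Finset.sum_mul]; rfl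
  rw [h, SS, ← Finset.sum_sub_distrib]
  refine Finset.dvd_sum fun a _ => ?_
  rw [← Finset.sum_sub_distrib]
  refine Finset.dvd_sum fun b _ => ?_
  obtain ⟨u, hu⟩ := es_odd m a
  obtain ⟨v, hv⟩ := es_even m b
  rw [sub_eq_iff_eq_add] at hu hv
  rw [hu, hv]
  refine ⟨sg a b * (u * (X ^ m * v + E b) + O a * v), by ring⟩

def FF (m n : ℕ) (P : ℕ → ℕ → Prop) [∀ a b, Decidable (P a b)] : Finset (Finset ℕ × Finset ℕ) :=
  (powerset (range m) ×ˢ powerset (range m)).filter fun p => wt p = n ∧ P p.1.card p.2.card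

lemma SS_coeff (m n : ℕ) (h : n < m) : coeff n (SS m) =
    ((FF m n fun a b => b < a).card : ℤ) - ((FF m n fun a b => a < b).card : ℤ) := by
  have h1 := (X_pow_dvd_iff.1 (SS_dvd' m)) n h
  rw [map_sub, sub_eq_zero] at h1
  rw [← h1, map_sum, FF, FF, Finset.card_filter, Finset.card_filter]
  push_cast
  rw [← Finset.sum_sub_distrib]
  refine Finset.sum_congr rfl fun p _ => ?_
  rw [sg_eq, coeff_C_mul, coeff_X_pow, sgz]
  by_cases h1 : wt p = n
  · rw [if_pos h1.symm]
    simp only [h1, true_and]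
    split_ifs <;> omega
  · have h2 : ¬ n = wt p := fun h => h1 h.symm
    simp [h1, h2]

/-! ### the bijection -/

def prt (p : Finset ℕ × Finset ℕ) : Multiset ℕ :=
  p.1.val.map (fun i => 2 * i + 1) + p.2.val.map (fun i => 2 * i + 2)

lemma prt_nodup (p : Finset ℕ × Finset ℕ) : (prt p).Nodup := by
  rw [prt, Multiset.nodup_add]
  refine ⟨p.1.nodup.map fun i j h => ?_, p.2.nodup.map fun i j h => ?_, ?_⟩
  · omega
  · omega
  · rw [Multiset.disjoint_left]
    intro x hx hx'
    obtain ⟨i, _, hi⟩ := Multiset.mem_map.1 hx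
    obtain ⟨j, _, hj⟩ := Multiset.mem_map.1 hx'
    omega

lemma prt_odd (p : Finset ℕ × Finset ℕ) :
    (prt p).filter (fun x => x % 2 = 1) = p.1.val.map (fun i => 2 * i + 1) := by
  rw [prt, Multiset.filter_add, Multiset.filter_eq_self.2, Multiset.filter_eq_nil.2, add_zero]
  · intro x hx
    obtain ⟨i, _, hi⟩ := Multiset.mem_map.1 hx
    omega
  · intro x hx
    obtain ⟨i, _, hi⟩ := Multiset.mem_map.1 hx
    omega

lemma prt_even (p : Finset ℕ × Finset ℕ) :
    (prt p).filter (fun x => x % 2 = 0) = p.2.val.map (fun i => 2 * i + 2) := by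
  rw [prt, Multiset.filter_add, Multiset.filter_eq_nil.2, Multiset.filter_eq_self.2, zero_add]
  · intro x hx
    obtain ⟨i, _, hi⟩ := Multiset.mem_map.1 hx
    omega
  · intro x hx
    obtain ⟨i, _, hi⟩ := Multiset.mem_map.1 hx
    omega

lemma prt_inj : Function.Injective prt := by
  intro p q h
  have h1 := prt_odd p
  have h2 := prt_even p
  rw [h, prt_odd] at h1
  rw [h, prt_even] at h2
  have i1 : Function.Injective (fun i : ℕ => 2 * i + 1) := fun i j h => by simp only at h; omega
  have i2 : Function.Injective (fun i : ℕ => 2 * i + 2) := fun i j h => by simp only at h; omega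
  have a1 := Multiset.map_injective i1 h1
  have a2 := Multiset.map_injective i2 h2
  exact Prod.ext (Finset.val_injective a1.symm) (Finset.val_injective a2.symm)

def mkP (n : ℕ) (p : Finset ℕ × Finset ℕ) (h : wt p = n) : n.Partition where
  parts := prt p
  parts_pos := by
    intro i hi
    rw [prt, Multiset.mem_add] at hi
    rcases hi with hi | hi <;> obtain ⟨j, _, hj⟩ := Multiset.mem_map.1 hi <;> omega
  parts_sum := by
    rw [prt, Multiset.sum_add, ← h]; rfl

lemma card_FF (m n : ℕ) (h : n < m) (P : ℕ → ℕ → Prop) [∀ a b, Decidable (P a b)] :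
    Nat.card {l : n.Partition // l.parts.Nodup ∧ P l.oddCount l.evenCount} = (FF m n P).card := by
  symm
  rw [← Nat.card_eq_finsetCard]
  have hwt : ∀ x : FF m n P, wt x.1 = n := fun x => (Finset.mem_filter.1 x.2).2.1
  have hP : ∀ x : FF m n P, P x.1.1.card x.1.2.card := fun x => (Finset.mem_filter.1 x.2).2.2
  have hodd : ∀ p (hp : wt p = n), (mkP n p hp).oddCount = p.1.card := by
    intro p hp
    change ((prt p).filter _).card = _
    rw [prt_odd, Multiset.card_map]; rfl
  have heven : ∀ p (hp : wt p = n), (mkP n p hp).evenCount = p.2.card := by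
    intro p hp
    change ((prt p).filter _).card = _
    rw [prt_even, Multiset.card_map]; rfl
  refine Nat.card_eq_of_bijective (fun x : FF m n P => ⟨mkP n x.1 (hwt x), prt_nodup _, ?_⟩) ⟨?_, ?_⟩
  · rw [hodd, heven]; exact hP x
  · intro x x' hx
    have : (mkP n x.1 (hwt x)).parts = (mkP n x'.1 (hwt x')).parts := by
      rw [Subtype.mk.injEq] at hx
      rw [hx]
    exact Subtype.ext (prt_inj this)
  · rintro ⟨l, hl, hlP⟩
    let p : Finset ℕ × Finset ℕ := ((range m).filter fun i => 2 * i + 1 ∈ l.parts,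
      (range m).filter fun i => 2 * i + 2 ∈ l.parts)
    have hle : ∀ x ∈ l.parts, x ≤ n := fun x hx => by
      have := Multiset.le_sum_of_mem hx
      rwa [l.parts_sum] at this
    have hp : prt p = l.parts := by
      rw [(prt_nodup p).ext hl]
      intro x
      rw [prt, Multiset.mem_add, Multiset.mem_map, Multiset.mem_map]
      simp only [p, Finset.mem_val, Finset.mem_filter, Finset.mem_range]
      constructor
      · rintro (⟨i, ⟨_, hi⟩, rfl⟩ | ⟨i, ⟨_, hi⟩, rfl⟩) <;> exact hi
      · intro hx
        have h1 := hle x hx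
        have h2 := l.parts_pos hx
        rcases Nat.even_or_odd' x with ⟨i, hi | hi⟩
        · right
          have e : 2 * (i - 1) + 2 = x := by omega
          exact ⟨i - 1, ⟨by omega, by rwa [e]⟩, e⟩
        · left
          exact ⟨i, ⟨by omega, by rwa [← hi]⟩, hi.symm⟩
    have hw : wt p = n := by
      rw [← l.parts_sum, ← hp, prt, Multiset.sum_add]; rfl
    have hml : mkP n p hw = l := Nat.Partition.ext hp
    refine ⟨⟨p, ?_⟩, ?_⟩
    · rw [FF, Finset.mem_filter]
      refine ⟨?_, hw, ?_⟩
      · rw [Finset.mem_product]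
        exact ⟨Finset.mem_powerset.2 (Finset.filter_subset _ _),
          Finset.mem_powerset.2 (Finset.filter_subset _ _)⟩
      · rw [← hodd p hw, ← heven p hw, hml]; exact hlP
    · exact Subtype.ext hml

end DP

/-- For every integer `n > 19`, among partitions of `n` into distinct parts, those with
more odd parts than even parts outnumber those with more even parts than odd parts. -/
theorem do_gt_de (n : ℕ) (hn : 19 < n) :
    Nat.card {l : n.Partition // l.parts.Nodup ∧ l.evenCount < l.oddCount} >
      Nat.card {l : n.Partition // l.parts.Nodup ∧ l.oddCount < l.evenCount} := by
  have h1 := DP.card_FF (2 * n + 5) n (by omega) (fun a b => b < a)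
  have h2 := DP.card_FF (2 * n + 5) n (by omega) (fun a b => a < b)
  have h3 := DP.SS_coeff (2 * n + 5) n (by omega)
  have h4 := DP.SS_pos n (by omega)
  rw [h1, h2]
  rw [h3] at h4
  omega
end
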